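/- Let σ be a primitive substitution on a d-letter alphabet, prolongable on the letter a, with non-periodic fixed point x = σ^ω(a). Then the set of return substitutions { σ_u : u a nonempty prefix of x } is finite, of cardinality at most (4K_σ³)^{|σ|·K_σ² + 1}. -/

import Mathlib

/-!
Write `κ = ⌊K_σ⌋` and, for a level `k`, call the images `σ ^ k (x_l)` the blocks of level `k`. The
proof only uses the properties collected in `Balanced`: blocks of a given level have comparable
lengths, up to the factor `κ`, and `x` is linearly recurrent with constant `κ ^ 2`. They follow from
the definition of `K_σ` (`balanced_floor`): the first level `j` at which every image contains every
letter is in the range of the maximum defining `Q_σ`, and some image of level `j - 1`, missing a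
letter, is not longer than `R_σ`, so that `|σ ^ j| ≤ K_σ`.

Every prefix of `x`, except a few short ones, consists of the first `l` blocks of some level `k`
followed by a part of the next block, where `6 κ⁴ ≤ l < 6 κ⁵` (`Balanced.exists_level_decomp`). Fix
`l`, and let `u_k` be the word formed by the first `l` blocks of level `k`. The morphism `σ ^ j` maps
the occurrences of `u_k` to occurrences of `u_{j+k}`, and the words between the former to words
between the latter. In a window of a fixed number of blocks, the number `F` of occurrences and the
number `N` of words between them are bounded independently of `k`, because two occurrences of a long
word are far apart in a non-periodic linearly recurrent sequence. If two levels `k` and `j + k` have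
the same `F` and the same `N`, then `σ ^ j` is a bijection both on occurrences (`Balanced.occ_down`)
and on the words between them (`Balanced.injOn_winWords`), the window being large enough to represent
all of `x`. A return substitution only depends on the pattern of the occurrences and of the return
words (`returnSubst_congr`).

Within a class of levels with given `l`, `F`, `N`, let `k₁` be the least level. A prefix `u` extending
`u_k`, with `k` in the class, occurs exactly at the images of those occurrences of `u_{k₁}` that are
followed by one of certain words of a fixed length; this set of words determines `σ_u`
(`Balanced.returnSubst_eq_of_extSet`). Since the number of factors of length `n` of `x` is at most
`κ ^ 2 * n`, the word `u_{k₁}` has at most `2 κ² + 1` extensions of that length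
(`Balanced.card_extensions_le`), so that each class contributes at most `2 ^ (2 κ² + 1)` return
substitutions. The number of classes is polynomial in `κ`, and the total is less than the bound.
-/

namespace Rauzy

variable {A B Γ : Type*}

/-- The factor `x_[i, i+n)` of length `n` of the sequence `x`, starting at position `i`. -/
def factorAt (x : ℕ → A) (i n : ℕ) : List A :=
  (List.range n).map fun k => x (i + k)

/-- The word `w` occurs in the sequence `x` at position `i`. -/
def OccursAt (x : ℕ → A) (w : List A) (i : ℕ) : Prop :=
  factorAt x i w.length = w

/-- The word `w` is a factor of the sequence `x`. -/
def IsFactor (x : ℕ → A) (w : List A) : Prop :=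
  ∃ i, OccursAt x w i

/-- The word `w` is a prefix of the sequence `x`. -/
def IsPrefixSeq (x : ℕ → A) (w : List A) : Prop :=
  OccursAt x w 0

/-- The sequence `x` is uniformly recurrent: every factor occurs with bounded gaps. -/
def UniformlyRecurrent (x : ℕ → A) : Prop :=
  ∀ w : List A, IsFactor x w → ∃ N, ∀ i, ∃ j, i ≤ j ∧ j < i + N ∧ OccursAt x w j

/-- `i < j` are two successive occurrences of `u` in `x`. -/
def SuccessiveOccs (x : ℕ → A) (u : List A) (i j : ℕ) : Prop :=
  i < j ∧ OccursAt x u i ∧ OccursAt x u j ∧ ∀ k, i < k → k < j → ¬ OccursAt x u k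

/-- The word `w` is a return word to `u` in `x`. -/
def IsReturnWord (x : ℕ → A) (u w : List A) : Prop :=
  ∃ i j, SuccessiveOccs x u i j ∧ w = factorAt x i (j - i)

/-- The set `ℛ_{x,u}` of return words to `u` in `x`. -/
def returnWords (x : ℕ → A) (u : List A) : Set (List A) :=
  {w | IsReturnWord x u w}

/-- The next occurrence of `u` in `x` strictly after position `i`. -/
noncomputable def nextOcc (x : ℕ → A) (u : List A) (i : ℕ) : ℕ :=
  sInf {j | i < j ∧ OccursAt x u j}

/-- The increasing enumeration of the occurrences of the prefix `u` in `x`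
(position `0` is an occurrence since `u` is a prefix). -/
noncomputable def occSeq (x : ℕ → A) (u : List A) : ℕ → ℕ
  | 0 => 0
  | n + 1 => nextOcc x u (occSeq x u n)

/-- The `n`-th return word `mₙ` in the decomposition `x = m₀m₁m₂⋯` of `x`
into return words to the prefix `u`. -/
noncomputable def retWord (x : ℕ → A) (u : List A) (n : ℕ) : List A :=
  factorAt x (occSeq x u n) (occSeq x u (n + 1) - occSeq x u n)

/-- The first index `n` such that `mₙ = w` in the decomposition of `x` into
return words to `u`. -/
noncomputable def firstIdx (x : ℕ → A) (u w : List A) : ℕ :=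
  sInf {n | retWord x u n = w}

open Classical in
/-- The derived sequence `D_u(x)` of `x` on the prefix `u`, with the return words
labelled `0, 1, 2, …` in the order of their first appearance in the decomposition
`x = m₀m₁m₂⋯` : the label of `mₙ` is the number of distinct return words appearing
strictly before the first occurrence of `mₙ`. -/
noncomputable def derivedSeq (x : ℕ → A) (u : List A) (n : ℕ) : ℕ :=
  ((Finset.range (firstIdx x u (retWord x u n))).image (retWord x u)).card

/-- The alphabet `R_{x,u} = {0, …, #ℛ_{x,u} - 1} ⊆ ℕ` of the derived sequence. -/
def derivedAlphabet (x : ℕ → A) (u : List A) : Set ℕ :=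
  Set.range (derivedSeq x u)

/-- The morphism `Θ_{x,u}` on letters: the return word labelled `k`. -/
noncomputable def thetaLetter (x : ℕ → A) (u : List A) (k : ℕ) : List A :=
  retWord x u (sInf {n | derivedSeq x u n = k})

/-- The canonical extension of a letter-to-word map to a monoid morphism on words. -/
def apply (f : A → List B) (w : List A) : List B :=
  (w.map f).flatten

/-- The morphism `Θ_{x,u} : R_{x,u}* → A*` on words. -/
noncomputable def theta (x : ℕ → A) (u : List A) (l : List ℕ) : List A :=
  apply (thetaLetter x u) l

/-- `y = f(x)` for an infinite sequence `x`: the image under `f` of every prefix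
of `x` is a prefix of `y`. -/
def SeqImage (f : A → List B) (x : ℕ → A) (y : ℕ → B) : Prop :=
  ∀ n, IsPrefixSeq y (apply f (factorAt x 0 n))

/-- The iterate `σⁿ` of a substitution, on letters. -/
def substIter (σ : A → List A) : ℕ → A → List A
  | 0 => fun a => [a]
  | n + 1 => fun a => apply σ (substIter σ n a)

/-- `σ` is prolongable on the letter `a`: `σ(a) = a·w` with `w` nonempty, and
`|σⁿ(a)| → ∞`. -/
def Prolongable (σ : A → List A) (a : A) : Prop :=
  (∃ w : List A, w ≠ [] ∧ σ a = a :: w) ∧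
    Filter.Tendsto (fun n => (substIter σ n a).length) Filter.atTop Filter.atTop

/-- The incidence matrix of a substitution: entry `(i, j)` is the number of
occurrences of the letter `i` in `σ(j)`. -/
def incMatrix [Fintype A] [DecidableEq A] (σ : A → List A) : Matrix A A ℕ :=
  Matrix.of fun i j => (σ j).count i

/-- A substitution is primitive if some power of its incidence matrix has all
entries strictly positive. -/
def Primitive [Fintype A] [DecidableEq A] (σ : A → List A) : Prop :=
  ∃ k, 0 < k ∧ ∀ i j, 0 < (incMatrix σ ^ k) i j

/-- The sequence `x` is (purely) periodic. -/
def IsPeriodic (x : ℕ → A) : Prop :=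
  ∃ p, 0 < p ∧ ∀ n, x (n + p) = x n

/-- The sequence `x` is ultimately periodic. -/
def IsUltimatelyPeriodic (x : ℕ → A) : Prop :=
  ∃ N p, 0 < p ∧ ∀ n, N ≤ n → x (n + p) = x n

/-- `|σ| = max_{a ∈ A} |σ(a)|`. -/
def mSize [Fintype A] (σ : A → List A) : ℕ :=
  Finset.univ.sup fun a => (σ a).length

/-- `min_{a ∈ A} |σ(a)|`. -/
noncomputable def minSize [Fintype A] [Nonempty A] (σ : A → List A) : ℕ :=
  Finset.univ.inf' Finset.univ_nonempty fun a => (σ a).length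

/-- `R_σ`: the maximal difference between two successive occurrences of a word of
length 2 in any fixed point of `σ`. -/
noncomputable def Rconst (σ : A → List A) : ℕ :=
  sSup {r | ∃ x : ℕ → A, SeqImage σ x x ∧
    ∃ w i j, w.length = 2 ∧ SuccessiveOccs x w i j ∧ r = j - i}

/-- `Q_σ = max( max_{0 ≤ n ≤ (d−1)d^d + 1} |σⁿ| / min_{a∈A} |σⁿ(a)| , |σ| )`. -/
noncomputable def Qconst [Fintype A] [Nonempty A] (σ : A → List A) : ℝ :=
  max
    ((Finset.range ((Fintype.card A - 1) * Fintype.card A ^ Fintype.card A + 2)).sup'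
      (Finset.nonempty_range_iff.mpr (by omega))
      fun n => (mSize (substIter σ n) : ℝ) / (minSize (substIter σ n) : ℝ))
    (mSize σ : ℝ)

/-- `K_σ = Q_σ · R_σ · |σ|`. -/
noncomputable def Kconst [Fintype A] [Nonempty A] (σ : A → List A) : ℝ :=
  Qconst σ * Rconst σ * mSize σ

/-- The index `m` such that `occSeq x u m = L`, i.e. the number of complete return
words to `u` composing the prefix of length `L` of `x`. -/
noncomputable def posIdx (x : ℕ → A) (u : List A) (L : ℕ) : ℕ :=
  sInf {m | occSeq x u m = L}

/-- The return substitution `σ_u : R_{x,u}* → R_{x,u}*`, on letters: it is the unique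
substitution satisfying `Θ_{x,u} ∘ σ_u = σ ∘ Θ_{x,u}`. -/
noncomputable def returnSubst (σ : A → List A) (x : ℕ → A) (u : List A) (k : ℕ) : List ℕ :=
  let n := sInf {n | derivedSeq x u n = k}
  let p := posIdx x u (apply σ (factorAt x 0 (occSeq x u n))).length
  let q := posIdx x u (apply σ (factorAt x 0 (occSeq x u (n + 1)))).length
  (List.range (q - p)).map fun t => derivedSeq x u (p + t)

/-- For a coding `φ`, the morphism `λ_u : R_{x,u}* → R_{φ(x),φ(u)}*`, on letters:
it is the unique morphism satisfying `φ ∘ Θ_{x,u} = Θ_{φ(x),φ(u)} ∘ λ_u`. -/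
noncomputable def lambdaMorph (φ : A → B) (x : ℕ → A) (u : List A) (k : ℕ) : List ℕ :=
  let n := sInf {n | derivedSeq x u n = k}
  let p := posIdx (fun i => φ (x i)) (u.map φ) (occSeq x u n)
  let q := posIdx (fun i => φ (x i)) (u.map φ) (occSeq x u (n + 1))
  (List.range (q - p)).map fun t => derivedSeq (fun i => φ (x i)) (u.map φ) (p + t)

/-- The Parikh vector (abelianization) of a word. -/
def parikh [DecidableEq A] (w : List A) : A → ℤ :=
  fun b => (w.count b : ℤ)


/-! ### Words, factors and block positions -/

@[simp] lemma factorAt_length (x : ℕ → A) (i n : ℕ) : (factorAt x i n).length = n := by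
  simp [factorAt]

lemma factorAt_eq_iff {x y : ℕ → A} {i j n : ℕ} :
    factorAt x i n = factorAt y j n ↔ ∀ t < n, x (i + t) = y (j + t) := by
  simp [factorAt]

lemma factorAt_add (x : ℕ → A) (i m n : ℕ) :
    factorAt x i (m + n) = factorAt x i m ++ factorAt x (i + m) n := by
  simp [factorAt, List.range_add, Function.comp_def, Nat.add_assoc]

lemma factorAt_one (x : ℕ → A) (i : ℕ) : factorAt x i 1 = [x i] := by
  simp [factorAt]

lemma mem_factorAt {x : ℕ → A} {i n : ℕ} {b : A} :
    b ∈ factorAt x i n ↔ ∃ t < n, x (i + t) = b := by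
  simp [factorAt]

lemma factorAt_take (x : ℕ → A) (i : ℕ) {m n : ℕ} (h : m ≤ n) :
    (factorAt x i n).take m = factorAt x i m := by
  obtain ⟨k, rfl⟩ := Nat.exists_eq_add_of_le h
  rw [factorAt_add, List.take_left' (by simp)]

lemma apply_append (f : A → List B) (v w : List A) :
    apply f (v ++ w) = apply f v ++ apply f w := by
  simp [apply]

@[simp] lemma apply_nil (f : A → List B) : apply f [] = [] := rfl

lemma apply_cons (f : A → List B) (b : A) (w : List A) :
    apply f (b :: w) = f b ++ apply f w := by
  simp [apply]

lemma apply_singleton (f : A → List B) (b : A) : apply f [b] = f b := by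
  simp [apply]

lemma mem_apply {f : A → List B} {w : List A} {c : B} :
    c ∈ apply f w ↔ ∃ b ∈ w, c ∈ f b := by
  simp [apply]

lemma apply_apply (σ : A → List A) (f : B → List A) (w : List B) :
    apply σ (apply f w) = apply (fun b => apply σ (f b)) w := by
  induction w with
  | nil => rfl
  | cons b w ih => rw [apply_cons, apply_append, ih, apply_cons]

lemma apply_substIter_zero (σ : A → List A) (w : List A) : apply (substIter σ 0) w = w := by
  induction w with
  | nil => rfl
  | cons b w ih => rw [apply_cons, ih]; rfl

lemma apply_substIter_succ (σ : A → List A) (k : ℕ) (w : List A) :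
    apply (substIter σ (k + 1)) w = apply σ (apply (substIter σ k) w) := by
  rw [apply_apply]; rfl

lemma apply_substIter_one (σ : A → List A) (w : List A) : apply (substIter σ 1) w = apply σ w := by
  rw [apply_substIter_succ, apply_substIter_zero]

lemma apply_substIter_add (σ : A → List A) (j k : ℕ) (w : List A) :
    apply (substIter σ (j + k)) w = apply (substIter σ j) (apply (substIter σ k) w) := by
  induction j with
  | zero => rw [Nat.zero_add, apply_substIter_zero]
  | succ j ih => rw [Nat.add_right_comm, apply_substIter_succ, ih, apply_substIter_succ]

lemma substIter_add (σ : A → List A) (j k : ℕ) (b : A) :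
    substIter σ (j + k) b = apply (substIter σ j) (substIter σ k b) := by
  have := apply_substIter_add σ j k [b]
  rwa [apply_singleton, apply_singleton] at this

lemma isPrefixSeq_iff {x : ℕ → A} {w : List A} : IsPrefixSeq x w ↔ factorAt x 0 w.length = w :=
  Iff.rfl

lemma seqImage_substIter {σ : A → List A} {x : ℕ → A} (h : SeqImage σ x x) (k : ℕ) :
    SeqImage (substIter σ k) x x := by
  induction k with
  | zero =>
    intro n
    rw [apply_substIter_zero, isPrefixSeq_iff, factorAt_length]
  | succ k ih =>
    intro n
    rw [apply_substIter_succ, ← isPrefixSeq_iff.1 (ih n)]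
    exact h _

/-- The position in `x` at which the image under `τ` of the letter `x l` starts, when `x` is a
fixed point of `τ`: the length of the image of the prefix of length `l`. -/
def pos (τ : A → List A) (x : ℕ → A) (l : ℕ) : ℕ := (apply τ (factorAt x 0 l)).length

section Pos

variable {τ : A → List A} {x : ℕ → A}

@[simp] lemma pos_zero : pos τ x 0 = 0 := by simp [pos, factorAt]

lemma pos_add (τ : A → List A) (x : ℕ → A) (l n : ℕ) :
    pos τ x (l + n) = pos τ x l + (apply τ (factorAt x l n)).length := by
  simp [pos, factorAt_add, apply_append]

lemma pos_succ (τ : A → List A) (x : ℕ → A) (l : ℕ) :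
    pos τ x (l + 1) = pos τ x l + (τ (x l)).length := by
  rw [pos_add, factorAt_one, apply_singleton]

/-- The fixed point, read from a block boundary on, spells out the images of the letters. -/
lemma factorAt_pos (h : SeqImage τ x x) (l n : ℕ) :
    factorAt x (pos τ x l) (apply τ (factorAt x l n)).length = apply τ (factorAt x l n) := by
  have h1 := isPrefixSeq_iff.1 (h (l + n))
  have h2 := isPrefixSeq_iff.1 (h l)
  rw [factorAt_add, apply_append, List.length_append, factorAt_add, h2] at h1
  have := List.append_cancel_left h1
  simpa [pos] using this

lemma factorAt_pos_one (h : SeqImage τ x x) (l : ℕ) :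
    factorAt x (pos τ x l) (τ (x l)).length = τ (x l) := by
  have := factorAt_pos h l 1
  rwa [factorAt_one, apply_singleton] at this

/-- Equal factors have images of equal length. -/
lemma pos_copy {l l' m s : ℕ} (hc : ∀ t < m, x (l + t) = x (l' + t)) (hs : s ≤ m) :
    pos τ x (l + s) + pos τ x l' = pos τ x (l' + s) + pos τ x l := by
  have : factorAt x l s = factorAt x l' s :=
    factorAt_eq_iff.2 fun t ht => hc t (by omega)
  rw [pos_add, pos_add, this]; omega

/-- Equal factors have equal images. -/
lemma letter_copy (h : SeqImage τ x x) {l l' m : ℕ} (hc : ∀ t < m, x (l + t) = x (l' + t))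
    {t : ℕ} (ht : pos τ x l + t < pos τ x (l + m)) :
    x (pos τ x l + t) = x (pos τ x l' + t) := by
  have he : factorAt x l m = factorAt x l' m := factorAt_eq_iff.2 hc
  have h1 := factorAt_pos h l m
  have h2 := factorAt_pos h l' m
  rw [← he] at h2
  rw [← h2] at h1
  rw [pos_add] at ht
  simp only [factorAt_length] at h1
  exact factorAt_eq_iff.1 h1 t (by omega)

end Pos

lemma pos_substIter_zero (σ : A → List A) (x : ℕ → A) (l : ℕ) : pos (substIter σ 0) x l = l := by
  rw [pos, apply_substIter_zero, factorAt_length]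

lemma pos_substIter_add {σ : A → List A} {x : ℕ → A} (h : SeqImage σ x x) (j k l : ℕ) :
    pos (substIter σ (j + k)) x l = pos (substIter σ j) x (pos (substIter σ k) x l) := by
  rw [pos, pos, apply_substIter_add]
  have := isPrefixSeq_iff.1 (seqImage_substIter h k l)
  rw [pos, this]

lemma pos_substIter_one (σ : A → List A) (x : ℕ → A) (l : ℕ) :
    pos (substIter σ 1) x l = pos σ x l := by
  rw [pos, apply_substIter_one, pos]

lemma le_length_apply {f : A → List B} {q : ℕ} {w : List A} (h : ∀ b, q ≤ (f b).length) :
    w.length * q ≤ (apply f w).length := by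
  induction w with
  | nil => simp
  | cons b w ih =>
    rw [apply_cons, List.length_append, List.length_cons]
    have := h b
    nlinarith

lemma length_apply_le {f : A → List B} {q : ℕ} {w : List A} (h : ∀ b, (f b).length ≤ q) :
    (apply f w).length ≤ w.length * q := by
  induction w with
  | nil => simp
  | cons b w ih =>
    rw [apply_cons, List.length_append, List.length_cons]
    have := h b
    nlinarith

/-! ### Return substitutions depend only on the pattern of return words -/

lemma card_image_le_of_kernel {α β γ : Type*} [DecidableEq β] [DecidableEq γ] (s : Finset α)
    (f : α → β) (h : α → γ) (hk : ∀ a ∈ s, ∀ b ∈ s, f a = f b → h a = h b) :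
    (s.image h).card ≤ (s.image f).card ∧
      ((s.image h).card = (s.image f).card → ∀ a ∈ s, ∀ b ∈ s, h a = h b → f a = f b) := by
  classical
  rcases s.eq_empty_or_nonempty with rfl | ⟨a0, ha0⟩
  · simp
  -- `ψ` expresses `h` through `f`
  let ψ : β → γ := fun b => if hb : ∃ a ∈ s, f a = b then h hb.choose else h a0
  have hψ : ∀ a ∈ s, ψ (f a) = h a := by
    intro a ha
    have hb : ∃ a' ∈ s, f a' = f a := ⟨a, ha, rfl⟩
    have h1 : ψ (f a) = h hb.choose := dif_pos hb
    rw [h1]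
    exact hk _ hb.choose_spec.1 _ ha hb.choose_spec.2
  have him : s.image h = (s.image f).image ψ := by
    rw [Finset.image_image]
    exact Finset.image_congr fun a ha => (hψ a ha).symm
  refine ⟨him ▸ Finset.card_image_le, fun hcard a ha b hb hab => ?_⟩
  rw [him] at hcard
  have hinj := Finset.card_image_iff.1 hcard
  exact hinj (Finset.mem_coe.2 (Finset.mem_image_of_mem f ha))
    (Finset.mem_coe.2 (Finset.mem_image_of_mem f hb)) (by rw [hψ a ha, hψ b hb, hab])

lemma derivedSeq_congr {x : ℕ → A} {u v : List A}
    (h : ∀ m n, retWord x u m = retWord x u n ↔ retWord x v m = retWord x v n) :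
    derivedSeq x u = derivedSeq x v := by
  classical
  funext n
  have h1 : firstIdx x u (retWord x u n) = firstIdx x v (retWord x v n) := by
    simp only [firstIdx, h]
  rw [derivedSeq, derivedSeq, h1]
  apply le_antisymm
  · exact (card_image_le_of_kernel _ _ _ fun a _ b _ => (h a b).2).1
  · exact (card_image_le_of_kernel _ _ _ fun a _ b _ => (h a b).1).1

lemma nextOcc_eq {x : ℕ → A} {u : List A} {i j : ℕ} (h : SuccessiveOccs x u i j) :
    nextOcc x u i = j := by
  apply le_antisymm
  · exact Nat.sInf_le ⟨h.1, h.2.2.1⟩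
  · refine le_csInf ⟨j, h.1, h.2.2.1⟩ fun k hk => ?_
    by_contra hlt
    exact h.2.2.2 k hk.1 (by omega) hk.2

lemma successiveOccs_nextOcc {x : ℕ → A} {u : List A} {i : ℕ} (hi : OccursAt x u i)
    (hrec : ∃ j, i < j ∧ OccursAt x u j) : SuccessiveOccs x u i (nextOcc x u i) := by
  have hmem : nextOcc x u i ∈ {j | i < j ∧ OccursAt x u j} := Nat.sInf_mem hrec
  refine ⟨hmem.1, hi, hmem.2, fun k hk hlt hocc => ?_⟩
  exact (Nat.notMem_of_lt_sInf hlt) ⟨hk, hocc⟩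

lemma successiveOccs_occSeq {x : ℕ → A} {u : List A} (h0 : OccursAt x u 0)
    (hrec : ∀ i, ∃ j, i < j ∧ OccursAt x u j) (n : ℕ) :
    SuccessiveOccs x u (occSeq x u n) (occSeq x u (n + 1)) := by
  induction n with
  | zero => exact successiveOccs_nextOcc h0 (hrec _)
  | succ n ih => exact successiveOccs_nextOcc ih.2.2.1 (hrec _)

/-- If the occurrences of `v` are the images under `σ ^ j` of those of `u`, and `σ ^ j` identifies
no two return words to `u`, then `u` and `v` have the same return substitution. -/
lemma returnSubst_congr {σ : A → List A} {x : ℕ → A} (hfix : SeqImage σ x x) (j : ℕ)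
    (hmono : StrictMono (pos (substIter σ j) x)) {u v : List A} (h0 : OccursAt x u 0)
    (hrec : ∀ i, ∃ j, i < j ∧ OccursAt x u j)
    (hocc : ∀ i, OccursAt x v i ↔ ∃ i', OccursAt x u i' ∧ i = pos (substIter σ j) x i')
    (hinj : ∀ i₁ i₁' i₂ i₂', SuccessiveOccs x u i₁ i₁' → SuccessiveOccs x u i₂ i₂' →
      factorAt x (pos (substIter σ j) x i₁)
          (pos (substIter σ j) x i₁' - pos (substIter σ j) x i₁) =
        factorAt x (pos (substIter σ j) x i₂)
          (pos (substIter σ j) x i₂' - pos (substIter σ j) x i₂) →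
      factorAt x i₁ (i₁' - i₁) = factorAt x i₂ (i₂' - i₂)) :
    returnSubst σ x u = returnSubst σ x v := by
  set g := pos (substIter σ j) x with hg
  have hsucc := successiveOccs_occSeq h0 hrec
  have hseq : ∀ n, occSeq x v n = g (occSeq x u n) := by
    intro n
    induction n with
    | zero => simp [occSeq, hg]
    | succ n ih =>
      have h := hsucc n
      rw [occSeq, ih]
      refine nextOcc_eq ⟨hmono h.1, (hocc _).2 ⟨_, h.2.1, rfl⟩, (hocc _).2 ⟨_, h.2.2.1, rfl⟩, ?_⟩
      intro k hk hlt hv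
      obtain ⟨i', hi', rfl⟩ := (hocc k).1 hv
      exact h.2.2.2 i' (hmono.lt_iff_lt.1 hk) (hmono.lt_iff_lt.1 hlt) hi'
  have hret : ∀ m n, retWord x u m = retWord x u n ↔ retWord x v m = retWord x v n := by
    intro m n
    rw [retWord, retWord, retWord, retWord, hseq, hseq, hseq, hseq]
    constructor
    · intro h
      have hlen : occSeq x u (m + 1) - occSeq x u m = occSeq x u (n + 1) - occSeq x u n := by
        simpa using congrArg List.length h
      obtain ⟨p, hp⟩ := Nat.exists_eq_add_of_le (hsucc m).1.le
      obtain ⟨q, hq⟩ := Nat.exists_eq_add_of_le (hsucc n).1.le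
      have hpq : p = q := by omega
      subst hpq
      rw [hp, hq] at h ⊢
      simp only [Nat.add_sub_cancel_left] at h
      have hF := seqImage_substIter hfix j
      rw [hg, pos_add, pos_add, Nat.add_sub_cancel_left, Nat.add_sub_cancel_left,
        factorAt_pos hF, factorAt_pos hF, h]
    · exact hinj _ _ _ _ (hsucc m) (hsucc n)
  have hder := derivedSeq_congr hret
  have hpos : ∀ n, posIdx x v (apply σ (factorAt x 0 (occSeq x v n))).length =
      posIdx x u (apply σ (factorAt x 0 (occSeq x u n))).length := by
    intro n
    have e1 : (apply σ (factorAt x 0 (occSeq x v n))).length =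
        g (apply σ (factorAt x 0 (occSeq x u n))).length := by
      change pos σ x (occSeq x v n) = g (pos σ x (occSeq x u n))
      rw [hseq, ← pos_substIter_one σ x (g (occSeq x u n)),
        ← pos_substIter_one σ x (occSeq x u n), hg, ← pos_substIter_add hfix,
        ← pos_substIter_add hfix, Nat.add_comm]
    rw [e1]
    simp only [posIdx, hseq, hmono.injective.eq_iff]
  funext k
  simp only [returnSubst, hder, hpos]

/-! ### Lengths of iterates and block positions -/

lemma length_le_mSize [Fintype A] (τ : A → List A) (b : A) : (τ b).length ≤ mSize τ :=
  Finset.le_sup (f := fun a => (τ a).length) (Finset.mem_univ b)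

lemma mSize_le [Fintype A] {τ : A → List A} {N : ℕ} (h : ∀ b, (τ b).length ≤ N) :
    mSize τ ≤ N := Finset.sup_le fun b _ => h b

lemma minSize_le_length [Fintype A] [Nonempty A] (τ : A → List A) (b : A) :
    minSize τ ≤ (τ b).length :=
  Finset.inf'_le (fun a => (τ a).length) (Finset.mem_univ b)

lemma le_minSize [Fintype A] [Nonempty A] {τ : A → List A} {N : ℕ}
    (h : ∀ b, N ≤ (τ b).length) : N ≤ minSize τ :=
  Finset.le_inf' _ _ fun b _ => h b

lemma mSize_substIter_add [Fintype A] (σ : A → List A) (j k : ℕ) :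
    mSize (substIter σ (j + k)) ≤ mSize (substIter σ j) * mSize (substIter σ k) := by
  refine mSize_le fun b => ?_
  rw [substIter_add, Nat.mul_comm]
  exact (length_apply_le (length_le_mSize _)).trans
    (Nat.mul_le_mul_right _ (length_le_mSize _ b))

lemma minSize_substIter_add [Fintype A] [Nonempty A] (σ : A → List A) (j k : ℕ) :
    minSize (substIter σ j) * minSize (substIter σ k) ≤ minSize (substIter σ (j + k)) := by
  refine le_minSize fun b => ?_
  rw [substIter_add, Nat.mul_comm]
  exact (Nat.mul_le_mul_right _ (minSize_le_length _ b)).trans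
    (le_length_apply (minSize_le_length _))

lemma mSize_substIter_one [Fintype A] (σ : A → List A) : mSize (substIter σ 1) = mSize σ := by
  have : substIter σ 1 = σ := by
    funext b
    change apply σ [b] = σ b
    rw [apply_singleton]
  rw [this]

lemma mSize_substIter_zero [Fintype A] [Nonempty A] (σ : A → List A) :
    mSize (substIter σ 0) = 1 := by
  apply le_antisymm
  · exact mSize_le fun b => le_rfl
  · exact length_le_mSize (substIter σ 0) (Classical.arbitrary A)

lemma length_substIter_pos {σ : A → List A} (hne : ∀ b, σ b ≠ []) (k : ℕ) (b : A) :
    1 ≤ (substIter σ k b).length := by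
  induction k with
  | zero => exact le_rfl
  | succ k ih =>
    have h := le_length_apply (f := σ) (q := 1) (w := substIter σ k b)
      fun c => List.length_pos_iff.2 (hne c)
    rw [Nat.mul_one] at h
    exact ih.trans h

lemma pos_add_le [Fintype A] (τ : A → List A) (x : ℕ → A) (l n : ℕ) :
    pos τ x (l + n) ≤ pos τ x l + n * mSize τ := by
  rw [pos_add]
  have := length_apply_le (w := factorAt x l n) (length_le_mSize τ)
  rw [factorAt_length] at this
  omega

lemma le_pos_add [Fintype A] [Nonempty A] (τ : A → List A) (x : ℕ → A) (l n : ℕ) :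
    pos τ x l + n * minSize τ ≤ pos τ x (l + n) := by
  rw [pos_add]
  have := le_length_apply (w := factorAt x l n) (minSize_le_length τ)
  rw [factorAt_length] at this
  omega

lemma strictMono_pos {σ : A → List A} (hne : ∀ b, σ b ≠ []) (k : ℕ) (x : ℕ → A) :
    StrictMono (pos (substIter σ k) x) := by
  refine strictMono_nat_of_lt_succ fun l => ?_
  rw [pos_succ]
  have := length_substIter_pos hne k (x l)
  omega

/-- Every position lies in some block. -/
lemma exists_block {g : ℕ → ℕ} (hg : StrictMono g) (h0 : g 0 = 0) (i : ℕ) :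
    ∃ l, g l ≤ i ∧ i < g (l + 1) := by
  induction i with
  | zero => exact ⟨0, h0.le, by have := hg Nat.zero_lt_one; rw [h0] at this; exact this⟩
  | succ i ih =>
    obtain ⟨l, h1, h2⟩ := ih
    by_cases h : i + 1 < g (l + 1)
    · exact ⟨l, by omega, h⟩
    · refine ⟨l + 1, by omega, ?_⟩
      have := hg (Nat.lt_succ_self (l + 1))
      have e : (l + 1).succ = l + 1 + 1 := rfl
      rw [e] at this
      omega

lemma exists_occ_block {τ : A → List A} {x : ℕ → A} (h : SeqImage τ x x) {l : ℕ} {w : List A}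
    (hw : w <:+: τ (x l)) :
    ∃ p, pos τ x l ≤ p ∧ p + w.length ≤ pos τ x (l + 1) ∧ OccursAt x w p := by
  obtain ⟨s, t, hst⟩ := hw
  have h1 := factorAt_pos_one h l
  have h2 := pos_succ τ x l
  rw [← hst, List.length_append, List.length_append, factorAt_add, factorAt_add] at h1
  rw [← hst, List.length_append, List.length_append] at h2
  refine ⟨pos τ x l + s.length, by omega, by omega, ?_⟩
  have h3 := (List.append_inj h1 (by simp)).1
  exact (List.append_inj h3 (by simp)).2

/-! ### Consequences of primitivity -/

lemma mem_substIter_iff [Fintype A] [DecidableEq A] (σ : A → List A) (k : ℕ) (b c : A) :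
    b ∈ substIter σ k c ↔ 0 < (incMatrix σ ^ k) b c := by
  induction k generalizing b with
  | zero =>
    simp only [substIter, List.mem_singleton, pow_zero, Matrix.one_apply]
    split <;> simp_all
  | succ k ih =>
    simp only [substIter]
    rw [mem_apply, pow_succ', Matrix.mul_apply, Finset.sum_pos_iff]
    refine exists_congr fun e => ?_
    rw [ih, CanonicallyOrderedAdd.mul_pos, incMatrix, Matrix.of_apply, List.count_pos_iff, and_comm]
    simp

lemma exists_full_level [Fintype A] [DecidableEq A] {σ : A → List A} (h : Primitive σ) :
    ∃ k, ∀ b c, b ∈ substIter σ k c := by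
  obtain ⟨k, -, hk⟩ := h
  exact ⟨k, fun b c => (mem_substIter_iff σ k b c).2 (hk b c)⟩

lemma nonerasing [Fintype A] [DecidableEq A] {σ : A → List A} (h : Primitive σ) (c : A) :
    σ c ≠ [] := by
  obtain ⟨k, hk0, hk⟩ := h
  obtain ⟨k, rfl⟩ := Nat.exists_eq_add_of_lt hk0
  intro hc
  have h1 := (mem_substIter_iff σ _ c c).2 (hk c c)
  rw [Nat.zero_add, substIter_add] at h1
  have : substIter σ 1 c = [] := by
    change apply σ [c] = []
    rw [apply_singleton, hc]
  rw [this] at h1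
  simp at h1

lemma exists_le_minSize [Fintype A] [Nonempty A] [Nontrivial A] {σ : A → List A} {k₀ : ℕ}
    (hk : ∀ b c, b ∈ substIter σ k₀ c) (n : ℕ) : ∃ k, n ≤ minSize (substIter σ k) := by
  have h2 : 2 ≤ minSize (substIter σ k₀) := by
    refine le_minSize fun e => ?_
    obtain ⟨b, c, hbc⟩ := exists_pair_ne A
    have hb := hk b e
    have hc := hk c e
    by_contra hlt
    match hw : substIter σ k₀ e, hlt with
    | [], _ => simp [hw] at hb
    | [f], _ =>
      rw [hw, List.mem_singleton] at hb hc
      exact hbc (hb.trans hc.symm)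
    | f :: f' :: w, hlt => simp at hlt
  have h3 : ∀ m, 2 ^ m ≤ minSize (substIter σ (m * k₀)) := by
    intro m
    induction m with
    | zero =>
      rw [Nat.zero_mul, pow_zero]
      exact le_minSize fun b => le_rfl
    | succ m ih =>
      rw [Nat.succ_mul, pow_succ]
      exact (Nat.mul_le_mul ih h2).trans (minSize_substIter_add _ _ _)
  exact ⟨n * k₀, (Nat.lt_two_pow_self).le.trans (h3 n)⟩

/-! ### Recurrence of pairs of letters -/

section Recurrence

variable [Fintype A] [Nonempty A] [Nontrivial A] {σ : A → List A} {k₀ : ℕ}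

/-- Every factor of a fixed point of `σ` lies in some iterate of the first letter. -/
lemma pair_infix_substIter (hfull : ∀ b c, b ∈ substIter σ k₀ c) {y : ℕ → A}
    (hy : SeqImage σ y y) {w : List A} {i : ℕ} (hi : OccursAt y w i) :
    ∃ m, w <:+: substIter σ m (y 0) := by
  obtain ⟨m, hm⟩ := exists_le_minSize hfull (i + w.length)
  refine ⟨m, ?_⟩
  have hle := hm.trans (minSize_le_length _ (y 0))
  have h1 := factorAt_pos_one (seqImage_substIter hy m) 0
  rw [pos_zero] at h1
  obtain ⟨t, ht⟩ := Nat.exists_eq_add_of_le hle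
  rw [ht, factorAt_add, factorAt_add, Nat.zero_add, show factorAt y i w.length = w from hi] at h1
  exact ⟨_, _, h1⟩

/-- The set of gaps defining `R_σ` is bounded. -/
lemma bddAbove_gaps (hne : ∀ b, σ b ≠ []) (hfull : ∀ b c, b ∈ substIter σ k₀ c) :
    BddAbove {r | ∃ x : ℕ → A, SeqImage σ x x ∧
      ∃ w i j, w.length = 2 ∧ SuccessiveOccs x w i j ∧ r = j - i} := by
  classical
  -- a level at which `p.2` occurs in the iterate of the letter `p.1`
  let lev : A × List.Vector A 2 → ℕ := fun p =>
    if h : ∃ m, p.2.1 <:+: substIter σ m p.1 then h.choose else 0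
  refine ⟨Finset.univ.sup fun p => 2 * mSize (substIter σ (lev p + k₀)), ?_⟩
  rintro r ⟨y, hy, w, i, j, hw, hij, rfl⟩
  have hex := pair_infix_substIter hfull hy hij.2.1
  let p : A × List.Vector A 2 := (y 0, ⟨w, hw⟩)
  have hlev : w <:+: substIter σ (lev p) (y 0) := by
    have : lev p = hex.choose := dif_pos hex
    rw [this]
    exact hex.choose_spec
  have hinf : ∀ c, w <:+: substIter σ (lev p + k₀) c := by
    intro c
    rw [substIter_add]
    obtain ⟨s, t, hst⟩ := List.append_of_mem (hfull (y 0) c)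
    rw [hst, apply_append, apply_cons]
    exact hlev.trans ⟨_, _, by rw [List.append_assoc]⟩
  have hmono := strictMono_pos hne (lev p + k₀) y
  obtain ⟨l, hl1, hl2⟩ := exists_block hmono pos_zero i
  obtain ⟨q, hq1, hq2, hq3⟩ :=
    exists_occ_block (seqImage_substIter hy (lev p + k₀)) (hinf (y (l + 1)))
  have hjq : j ≤ q := by
    by_contra hlt
    exact hij.2.2.2 q (by omega) (by omega) hq3
  have h2 := pos_add_le (substIter σ (lev p + k₀)) y l 2
  have h3 : j - i ≤ 2 * mSize (substIter σ (lev p + k₀)) := by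
    change _ ≤ pos _ y (l + 2) at hq2
    omega
  exact h3.trans (Finset.le_sup (f := fun p => 2 * mSize (substIter σ (lev p + k₀)))
    (Finset.mem_univ p))

lemma prefix_recurs (hne : ∀ b, σ b ≠ []) (hfull : ∀ b c, b ∈ substIter σ k₀ c) {x : ℕ → A}
    (hfix : SeqImage σ x x) (N B : ℕ) : ∃ j, B ≤ j ∧ ∀ t < N, x (j + t) = x t := by
  have hm0 := strictMono_pos hne k₀ x
  obtain ⟨p, hp1, -, hp3⟩ := exists_occ_block (seqImage_substIter hfix k₀) (l := B) (w := [x 0])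
    (List.singleton_infix_iff _ _ |>.2 (hfull (x 0) (x B)))
  have hp4 : x p = x 0 := by
    have : factorAt x p 1 = [x 0] := hp3
    rw [factorAt_one] at this
    exact List.singleton_inj.1 this
  obtain ⟨m, hm⟩ := exists_le_minSize hfull N
  have hmono := strictMono_pos hne m x
  refine ⟨pos (substIter σ m) x p, ?_, fun t ht => ?_⟩
  · have h1 := hm0.le_apply (x := B)
    have h2 := hmono.le_apply (x := p)
    omega
  · have h1 := le_pos_add (substIter σ m) x 0 1
    rw [pos_zero] at h1
    have := letter_copy (seqImage_substIter hfix m) (l := 0) (l' := p) (m := 1)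
      (fun t ht => by rw [Nat.lt_one_iff.1 ht]; simpa using hp4.symm) (t := t) (by
        rw [pos_zero]; omega)
    rw [pos_zero, Nat.zero_add] at this
    exact this.symm

/-- Every pair of consecutive letters of `x` starts in every window of length `R_σ`. -/
lemma exists_pair_window (hne : ∀ b, σ b ≠ []) (hfull : ∀ b c, b ∈ substIter σ k₀ c)
    {x : ℕ → A} (hfix : SeqImage σ x x) (l b : ℕ) :
    ∃ l', b ≤ l' ∧ l' < b + Rconst σ ∧ x l' = x l ∧ x (l' + 1) = x (l + 1) := by
  classical
  by_contra! hno
  -- a copy of the window, to the right of an occurrence of the pair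
  obtain ⟨c, hc1, hc2⟩ := prefix_recurs hne hfull hfix (b + Rconst σ + 1) (l + 1)
  have hno' : ∀ l', c + b ≤ l' → l' < c + b + Rconst σ →
      x l' = x l → x (l' + 1) ≠ x (l + 1) := by
    intro l' h1 h2
    obtain ⟨t, rfl⟩ := Nat.exists_eq_add_of_le (show c ≤ l' by omega)
    rw [Nat.add_assoc, hc2 t (by omega), hc2 (t + 1) (by omega)]
    exact hno t (by omega) (by omega)
  have hocc : ∀ p, OccursAt x [x l, x (l + 1)] p ↔ x p = x l ∧ x (p + 1) = x (l + 1) := by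
    intro p
    simp [OccursAt, factorAt, List.range_succ]
  -- the last occurrence before the window and the first one after it
  let P : ℕ → Prop := fun p => OccursAt x [x l, x (l + 1)] p
  have hPl : P l := (hocc l).2 ⟨rfl, rfl⟩
  have hi1 : P (Nat.findGreatest P (c + b)) := Nat.findGreatest_spec (by omega) hPl
  have hi2 : Nat.findGreatest P (c + b) ≤ c + b := Nat.findGreatest_le _
  have hi3 : ∀ k, Nat.findGreatest P (c + b) < k → k ≤ c + b → ¬ P k :=
    fun k hk hk' => Nat.findGreatest_is_greatest hk hk'
  have hex : ∃ j, Nat.findGreatest P (c + b) < j ∧ P j := by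
    obtain ⟨j, hj1, hj2⟩ := prefix_recurs hne hfull hfix (l + 2) (c + b + 1)
    refine ⟨j + l, by omega, (hocc _).2 ⟨hj2 l (by omega), ?_⟩⟩
    rw [Nat.add_assoc]
    exact hj2 (l + 1) (by omega)
  have hj1 := Nat.find_spec hex
  have hj2 : ∀ k, k < Nat.find hex → ¬ (Nat.findGreatest P (c + b) < k ∧ P k) :=
    fun k hk => Nat.find_min hex hk
  set i := Nat.findGreatest P (c + b)
  set j := Nat.find hex
  have hs : SuccessiveOccs x [x l, x (l + 1)] i j :=
    ⟨hj1.1, hi1, hj1.2, fun k hk hk' hP => hj2 k hk' ⟨hk, hP⟩⟩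
  have hle : j - i ≤ Rconst σ :=
    le_csSup (bddAbove_gaps hne hfull) ⟨x, hfix, _, i, j, rfl, hs, rfl⟩
  have hiw : ∀ p, P p → c + b ≤ p → c + b + Rconst σ ≤ p := by
    intro p hp h1
    by_contra h2
    exact hno' p h1 (by omega) ((hocc p).1 hp).1 ((hocc p).1 hp).2
  have hj3 : c + b ≤ j := by
    by_contra h
    exact hi3 j hj1.1 (by omega) hj1.2
  have h4 := hiw j hj1.2 hj3
  have h5 := hj1.1
  have h6 : i = c + b ∧ Rconst σ = 0 → False := by
    rintro ⟨h, h0⟩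
    omega
  by_cases hic : i = c + b
  · have := hiw i hi1 (by omega)
    exact h6 ⟨hic, by omega⟩
  · omega

end Recurrence

/-! ### The constant `K_σ` controls all the iterates -/

/-- The facts on `σ` and `x` used to count return substitutions, in terms of one integer `κ`:
the lengths of the images of the letters under an iterate of `σ` tend to infinity with the iterate
and differ at most by the factor `κ`, every factor of length `n` of `x` starts in every window of
length `κ ^ 2 * n`, and `x` is not ultimately periodic. -/
structure Balanced [Fintype A] [Nonempty A] (σ : A → List A) (x : ℕ → A) (κ : ℕ) : Prop where
  fix : SeqImage σ x x
  nonerasing : ∀ b, σ b ≠ []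
  four_le : 4 ≤ κ
  size_le : mSize σ ≤ κ
  growth : ∀ n, ∃ k, n ≤ minSize (substIter σ k)
  balance : ∀ k, mSize (substIter σ k) ≤ κ * minSize (substIter σ k)
  recur : ∀ n, 1 ≤ n → ∀ i l, ∃ l', i ≤ l' ∧ l' < i + κ ^ 2 * n ∧ ∀ t < n, x (l' + t) = x (l + t)
  aperiodic : ¬ IsUltimatelyPeriodic x

lemma length_substIter_le_succ {σ : A → List A} (hne : ∀ b, σ b ≠ []) (k n : ℕ) (b : A) :
    (substIter σ k b).length ≤ (substIter σ (k + n) b).length := by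
  have h := le_length_apply (w := substIter σ k b) (length_substIter_pos hne n)
  rw [Nat.mul_one] at h
  rwa [Nat.add_comm, substIter_add]

/-- The least exponent `j + 1` such that every `σ ^ (j + 1) (c)` contains all letters is at most
`2 ^ d`, since the set of letters of `σ ^ (i + 1) (c)` is determined by that of `σ ^ i (c)`. -/
lemma exists_min_full_level [Fintype A] [DecidableEq A] [Nontrivial A] {σ : A → List A}
    (h : Primitive σ) :
    ∃ j, (∀ b c, b ∈ substIter σ (j + 1) c) ∧ (∃ b c, b ∉ substIter σ j c) ∧
      j + 1 ≤ 2 ^ Fintype.card A := by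
  classical
  have hex := exists_full_level h
  let f : Finset A → Finset A := fun S => S.biUnion fun b => (σ b).toFinset
  have hf : ∀ i c, f^[i] {c} = (substIter σ i c).toFinset := by
    intro i c
    induction i with
    | zero => rfl
    | succ i ih =>
      rw [Function.iterate_succ_apply', ih]
      ext e
      simp only [f, Finset.mem_biUnion, List.mem_toFinset]
      exact mem_apply.symm
  have hup : ∀ i n, (∀ b c, b ∈ substIter σ i c) → ∀ b c, b ∈ substIter σ (i + n) c := by
    intro i n hi b c
    rw [substIter_add]
    have hne : substIter σ n c ≠ [] :=
      List.length_pos_iff.1 (length_substIter_pos (nonerasing h) n c)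
    obtain ⟨e, he⟩ := List.exists_mem_of_ne_nil _ hne
    exact mem_apply.2 ⟨e, he, hi b e⟩
  have hspec := Nat.find_spec hex
  have hmin := fun k (hk : k < Nat.find hex) => Nat.find_min hex hk
  have hpos : Nat.find hex ≠ 0 := by
    intro h0
    rw [h0] at hspec
    obtain ⟨b, c, hbc⟩ := exists_pair_ne A
    exact hbc (List.mem_singleton.1 (hspec b c))
  obtain ⟨j, hj⟩ := Nat.exists_eq_succ_of_ne_zero hpos
  rw [hj] at hspec hmin
  have hj1 := hmin j (Nat.lt_succ_self j)
  push Not at hj1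
  refine ⟨j, hspec, hj1, ?_⟩
  obtain ⟨b, c, hbc⟩ := hj1
  by_contra hlt
  have hcard : Fintype.card (Finset A) < Fintype.card (Fin (j + 1)) := by
    rw [Fintype.card_finset, Fintype.card_fin]; omega
  obtain ⟨i, i', hne, heq⟩ := Fintype.exists_ne_map_eq_of_card_lt
    (fun i : Fin (j + 1) => f^[i] {c}) hcard
  have key : ∀ i i' : ℕ, i < i' → i' ≤ j → f^[i] {c} = f^[i'] {c} → False := by
    intro i i' h1 h2 h3
    have h4 : f^[j] {c} = f^[j + 1 + (i' - i - 1)] {c} := by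
      rw [show j = (j - i) + i by omega, Function.iterate_add_apply, h3,
        ← Function.iterate_add_apply]
      congr 1
      omega
    rw [hf, hf] at h4
    have h5 := hup (j + 1) (i' - i - 1) hspec b c
    rw [← List.mem_toFinset, ← h4, List.mem_toFinset] at h5
    exact hbc h5
  have hi := i.2
  have hi' := i'.2
  rcases lt_or_gt_of_ne (fun h => hne (Fin.ext h) : (i : ℕ) ≠ i') with h1 | h1
  · exact key i i' h1 (by omega) heq
  · exact key i' i h1 (by omega) heq.symm

lemma nontrivial_of_aperiodic {x : ℕ → A} (hnp : ¬ IsUltimatelyPeriodic x) : Nontrivial A := by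
  by_contra h
  rw [not_nontrivial_iff_subsingleton] at h
  exact hnp ⟨0, 1, Nat.one_pos, fun n _ => Subsingleton.elim _ _⟩

lemma two_le_mSize [Fintype A] {σ : A → List A} {a : A} (hprol : Prolongable σ a) : 2 ≤ mSize σ := by
  obtain ⟨⟨w, hw, hσ⟩, -⟩ := hprol
  have h1 := length_le_mSize σ a
  rw [hσ, List.length_cons] at h1
  have := List.length_pos_iff.2 hw
  omega

lemma mSize_le_Qconst [Fintype A] [Nonempty A] (σ : A → List A) :
    (mSize σ : ℝ) ≤ Qconst σ := le_max_right _ _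

section Constants

variable [Fintype A] [DecidableEq A] [Nonempty A] {σ : A → List A} {a : A} {x : ℕ → A}

lemma one_le_Rconst (hprim : Primitive σ) (hfix : SeqImage σ x x)
    (hnp : ¬ IsUltimatelyPeriodic x) : 1 ≤ Rconst σ := by
  have := nontrivial_of_aperiodic hnp
  obtain ⟨k₀, hk⟩ := exists_full_level hprim
  obtain ⟨l', h1, h2, -⟩ := exists_pair_window (nonerasing hprim) hk hfix 0 0
  omega

/-- The first level `j` at which every image contains all letters satisfies `|σ ^ j| ≤ K_σ`. -/
lemma exists_level (hprim : Primitive σ) (hfix : SeqImage σ x x)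
    (hnp : ¬ IsUltimatelyPeriodic x) :
    ∃ j, (∀ b c, b ∈ substIter σ j c) ∧ (mSize (substIter σ j) : ℝ) ≤ Kconst σ := by
  have := nontrivial_of_aperiodic hnp
  have hne := nonerasing hprim
  obtain ⟨j, hj1, ⟨b, c, hbc⟩, hj2⟩ := exists_min_full_level hprim
  refine ⟨j + 1, hj1, ?_⟩
  -- `b` occurs in every window of length `R_σ`, but not in the factor `σ ^ j (c)`
  have hocc : ∀ e, ∃ l, x l = e := by
    intro e
    obtain ⟨p, -, -, hp⟩ := exists_occ_block (seqImage_substIter hfix (j + 1)) (l := 0) (w := [e])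
      (List.singleton_infix_iff _ _ |>.2 (hj1 e (x 0)))
    refine ⟨p, ?_⟩
    have : factorAt x p 1 = [e] := hp
    rw [factorAt_one] at this
    exact List.singleton_inj.1 this
  obtain ⟨l, rfl⟩ := hocc b
  obtain ⟨l₂, rfl⟩ := hocc c
  have hlen : (substIter σ j (x l₂)).length ≤ Rconst σ := by
    obtain ⟨p, hp1, hp2, hp3, -⟩ :=
      exists_pair_window hne hj1 hfix l (pos (substIter σ j) x l₂)
    by_contra hlt
    refine hbc ?_
    rw [← factorAt_pos_one (seqImage_substIter hfix j) l₂, mem_factorAt]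
    exact ⟨p - pos (substIter σ j) x l₂, by omega, by rw [Nat.add_sub_cancel' hp1, hp3]⟩
  have hlen2 : minSize (substIter σ (j + 1)) ≤ Rconst σ * mSize σ := by
    refine (minSize_le_length _ (x l₂)).trans ?_
    exact (length_apply_le (length_le_mSize σ)).trans (Nat.mul_le_mul_right _ hlen)
  have hcard : 2 ≤ Fintype.card A := Fintype.one_lt_card
  have hrange : j + 1 ∈
      Finset.range ((Fintype.card A - 1) * Fintype.card A ^ Fintype.card A + 2) := by
    rw [Finset.mem_range]
    have h1 : 2 ^ Fintype.card A ≤ Fintype.card A ^ Fintype.card A :=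
      Nat.pow_le_pow_left hcard _
    have h2 : 1 * Fintype.card A ^ Fintype.card A ≤
        (Fintype.card A - 1) * Fintype.card A ^ Fintype.card A :=
      Nat.mul_le_mul_right _ (by omega)
    omega
  have hQ : (mSize (substIter σ (j + 1)) : ℝ) / (minSize (substIter σ (j + 1)) : ℝ) ≤ Qconst σ :=
    (Finset.le_sup' (fun n => (mSize (substIter σ n) : ℝ) / (minSize (substIter σ n) : ℝ))
      hrange).trans (le_max_left _ _)
  have hqpos : (0 : ℝ) < minSize (substIter σ (j + 1)) := by
    exact_mod_cast le_minSize (length_substIter_pos hne (j + 1))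
  rw [div_le_iff₀ hqpos] at hQ
  have hQ0 : 0 ≤ Qconst σ := (Nat.cast_nonneg _).trans (mSize_le_Qconst σ)
  have hlen3 : (minSize (substIter σ (j + 1)) : ℝ) ≤ Rconst σ * mSize σ := by
    exact_mod_cast hlen2
  calc (mSize (substIter σ (j + 1)) : ℝ) ≤ Qconst σ * minSize (substIter σ (j + 1)) := hQ
    _ ≤ Qconst σ * (Rconst σ * mSize σ) := mul_le_mul_of_nonneg_left hlen3 hQ0
    _ = Kconst σ := by rw [Kconst]; ring

lemma window_mul_le_Kconst (hprim : Primitive σ) (hprol : Prolongable σ a)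
    (hfix : SeqImage σ x x) (hnp : ¬ IsUltimatelyPeriodic x) :
    (((Rconst σ + 1) * mSize σ : ℕ) : ℝ) ≤ Kconst σ := by
  have h1 : (2 : ℝ) ≤ mSize σ := by exact_mod_cast two_le_mSize hprol
  have h2 : (1 : ℝ) ≤ Rconst σ := by exact_mod_cast one_le_Rconst hprim hfix hnp
  have h3 := mSize_le_Qconst σ
  push_cast
  rw [Kconst]
  refine mul_le_mul_of_nonneg_right ?_ (by linarith)
  nlinarith

lemma four_le_Kconst (hprim : Primitive σ) (hprol : Prolongable σ a)
    (hfix : SeqImage σ x x) (hnp : ¬ IsUltimatelyPeriodic x) : 4 ≤ Kconst σ := by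
  refine le_trans ?_ (window_mul_le_Kconst hprim hprol hfix hnp)
  have h1 := two_le_mSize hprol
  have h2 := one_le_Rconst hprim hfix hnp
  exact_mod_cast (show 2 * 2 ≤ _ from Nat.mul_le_mul (by omega) h1)

/-- If `j` is a level with full images and `|σ ^ j| ≤ κ`, then each image under `σ ^ (j + n)` contains
all images under `σ ^ n`, whence the balance; a factor of length `n` lies in two blocks of the first
level whose blocks have length at least `n`, whence the recurrence. -/
lemma balanced_floor (hprim : Primitive σ) (hprol : Prolongable σ a)
    (hfix : SeqImage σ x x) (hnp : ¬ IsUltimatelyPeriodic x) :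
    Balanced σ x ⌊Kconst σ⌋₊ := by
  have := nontrivial_of_aperiodic hnp
  have hne := nonerasing hprim
  obtain ⟨j, hj1, hj2⟩ := exists_level hprim hfix hnp
  have hK4 := four_le_Kconst hprim hprol hfix hnp
  have hw := Nat.le_floor (window_mul_le_Kconst hprim hprol hfix hnp)
  have hκ4 : 4 ≤ ⌊Kconst σ⌋₊ := Nat.le_floor (by exact_mod_cast hK4)
  have hjκ := Nat.le_floor hj2
  set κ := ⌊Kconst σ⌋₊
  have hsize : mSize σ ≤ κ := by
    refine le_trans ?_ hw
    exact Nat.le_mul_of_pos_left _ (Nat.succ_pos _)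
  have hbal : ∀ k, mSize (substIter σ k) ≤ κ * minSize (substIter σ k) := by
    intro k
    have hq : 1 ≤ minSize (substIter σ k) := le_minSize (length_substIter_pos hne k)
    rcases Nat.le_total k j with hkj | hkj
    · obtain ⟨n, rfl⟩ := Nat.exists_eq_add_of_le hkj
      have : mSize (substIter σ k) ≤ mSize (substIter σ (k + n)) :=
        mSize_le fun b => (length_substIter_le_succ hne k n b).trans (length_le_mSize _ b)
      nlinarith
    · obtain ⟨n, rfl⟩ := Nat.exists_eq_add_of_le hkj
      have h1 : mSize (substIter σ n) ≤ minSize (substIter σ (j + n)) := by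
        refine le_minSize fun c => mSize_le fun b => ?_
        rw [Nat.add_comm, substIter_add]
        obtain ⟨s, t, hst⟩ := List.append_of_mem (hj1 b c)
        rw [hst, apply_append, apply_cons]
        simp only [List.length_append]
        omega
      calc _ ≤ mSize (substIter σ j) * mSize (substIter σ n) := mSize_substIter_add σ j n
        _ ≤ _ := Nat.mul_le_mul hjκ h1
  refine ⟨hfix, hne, hκ4, hsize, exists_le_minSize hj1, hbal, ?_, hnp⟩
  intro n hn i l
  have hexk : ∃ k, n ≤ minSize (substIter σ k) := exists_le_minSize hj1 n
  obtain ⟨k, hk1, hk2⟩ : ∃ k, n ≤ minSize (substIter σ k) ∧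
      (Rconst σ + 1) * mSize (substIter σ k) ≤ κ ^ 2 * n := by
    classical
    refine ⟨Nat.find hexk, Nat.find_spec hexk, ?_⟩
    have hmin := fun m (hm : m < Nat.find hexk) => Nat.find_min hexk hm
    rcases hk : Nat.find hexk with _ | k
    · rw [mSize_substIter_zero]
      have h2 : (Rconst σ + 1) * 1 ≤ (Rconst σ + 1) * mSize σ :=
        Nat.mul_le_mul_left _ (by have := two_le_mSize hprol; omega)
      nlinarith
    · rw [hk] at hmin
      have h1 := hmin k (Nat.lt_succ_self k)
      have h2 := mSize_substIter_add σ 1 k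
      rw [mSize_substIter_one, Nat.add_comm] at h2
      have h3 := hbal k
      calc (Rconst σ + 1) * mSize (substIter σ (k + 1))
          ≤ (Rconst σ + 1) * (mSize σ * (κ * n)) := by
            refine Nat.mul_le_mul_left _ (h2.trans (Nat.mul_le_mul_left _ (h3.trans ?_)))
            exact Nat.mul_le_mul_left _ (by omega)
        _ = ((Rconst σ + 1) * mSize σ) * (κ * n) := by ring
        _ ≤ κ * (κ * n) := Nat.mul_le_mul_right _ hw
        _ = κ ^ 2 * n := by ring
  have hmono := strictMono_pos hne k x
  obtain ⟨L, hL1, hL2⟩ := exists_block hmono pos_zero l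
  obtain ⟨L', hL1', hL2'⟩ := exists_block hmono pos_zero i
  obtain ⟨l', hl1, hl2, hl3, hl4⟩ := exists_pair_window hne hj1 hfix L (L' + 1)
  have hc : ∀ t < 2, x (L + t) = x (l' + t) := by
    intro t ht
    interval_cases t
    · exact hl3.symm
    · exact hl4.symm
  have h1 : pos (substIter σ k) x (L' + 1) ≤ pos (substIter σ k) x l' := hmono.monotone hl1
  have h2 : pos (substIter σ k) x (l' + 1) ≤ pos (substIter σ k) x (L' + (Rconst σ + 1)) :=
    hmono.monotone (by omega)
  have h3 := pos_add_le (substIter σ k) x L' (Rconst σ + 1)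
  have h4 := pos_copy (τ := substIter σ k) hc (s := 1) (by omega)
  have h5 := le_pos_add (substIter σ k) x (L + 1) 1
  refine ⟨pos (substIter σ k) x l' + (l - pos (substIter σ k) x L), by omega, by omega, ?_⟩
  intro t ht
  have h6 := letter_copy (seqImage_substIter hfix k) hc
    (t := l - pos (substIter σ k) x L + t) (by
      change _ < pos _ x (L + 1 + 1)
      omega)
  rw [Nat.add_assoc, ← h6]
  congr 1
  omega

end Constants

/-! ### Occurrences of prefixes -/

/-- The prefix of length `n` of `x` occurs at position `i`. -/
def Occ (x : ℕ → A) (n i : ℕ) : Prop := ∀ t < n, x (i + t) = x t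

lemma occ_iff {x : ℕ → A} {n i : ℕ} : Occ x n i ↔ OccursAt x (factorAt x 0 n) i := by
  rw [OccursAt, factorAt_length, factorAt_eq_iff]
  simp only [Nat.zero_add]
  rfl

lemma Occ.mono {x : ℕ → A} {n n' i : ℕ} (h : Occ x n i) (hn : n' ≤ n) : Occ x n' i :=
  fun t ht => h t (by omega)

lemma occ_zero (x : ℕ → A) (n : ℕ) : Occ x n 0 := fun t _ => by rw [Nat.zero_add]

lemma pos_of_occ {τ : A → List A} {x : ℕ → A} {n i s : ℕ} (h : Occ x n i) (hs : s ≤ n) :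
    pos τ x (i + s) = pos τ x i + pos τ x s := by
  have := pos_copy (τ := τ) (l := i) (l' := 0) (m := n)
    (by simpa [Occ] using h) hs
  rw [pos_zero, Nat.zero_add] at this
  omega

/-- `τ` maps occurrences of a prefix to occurrences of the image of that prefix. -/
lemma Occ.image {τ : A → List A} {x : ℕ → A} (hτ : SeqImage τ x x) {n i : ℕ} (h : Occ x n i) :
    Occ x (pos τ x n) (pos τ x i) := by
  intro t ht
  have := letter_copy hτ (l := i) (l' := 0) (m := n)
    (by simpa [Occ] using h) (t := t)
    (by rw [pos_of_occ h le_rfl]; omega)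
  rwa [pos_zero, Nat.zero_add] at this

/-- The factor between the images of two positions is the image of the factor between them. -/
lemma factorAt_image {τ : A → List A} {x : ℕ → A} (hτ : SeqImage τ x x)
    (hmono : StrictMono (pos τ x)) (i i' : ℕ) :
    factorAt x (pos τ x i) (pos τ x i' - pos τ x i) = apply τ (factorAt x i (i' - i)) := by
  rcases Nat.le_total i i' with h | h
  · obtain ⟨e, rfl⟩ := Nat.exists_eq_add_of_le h
    rw [Nat.add_sub_cancel_left, pos_add, Nat.add_sub_cancel_left, factorAt_pos hτ]
  · rw [Nat.sub_eq_zero_of_le h, Nat.sub_eq_zero_of_le (hmono.monotone h)]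
    simp [factorAt]

namespace Balanced

variable [Fintype A] [Nonempty A] {σ : A → List A} {x : ℕ → A} {κ : ℕ}

lemma fixk (H : Balanced σ x κ) (k : ℕ) : SeqImage (substIter σ k) x x := seqImage_substIter H.fix k

lemma mono (H : Balanced σ x κ) (k : ℕ) : StrictMono (pos (substIter σ k) x) :=
  strictMono_pos H.nonerasing k x

lemma one_le_min (H : Balanced σ x κ) (k : ℕ) : 1 ≤ minSize (substIter σ k) :=
  le_minSize (length_substIter_pos H.nonerasing k)

/-- A long factor has no short period, since it contains all factors of some length. -/
lemma no_short_period (H : Balanced σ x κ) {a D n : ℕ} (hD : 0 < D)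
    (hn : κ ^ 2 * (D + 1) ≤ n) (h : ∀ t < n, x (a + t) = x (a + D + t)) : False := by
  refine H.aperiodic ⟨0, D, hD, fun l _ => ?_⟩
  obtain ⟨l', h1, h2, h3⟩ := H.recur (D + 1) (by omega) a l
  obtain ⟨t, rfl⟩ := Nat.exists_eq_add_of_le h1
  have h4 := h t (by omega)
  have h5 := h3 D (by omega)
  have h6 := h3 0 (by omega)
  simp only [Nat.add_zero] at h6
  rw [← h6, ← h5, h4]
  congr 1
  omega

/-- Two distinct occurrences of a long prefix are far apart. -/
lemma lt_of_occ (H : Balanced σ x κ) {n i i' : ℕ} (hi : Occ x n i) (hi' : Occ x n i')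
    (h : i < i') : n < κ ^ 2 * (i' - i + 1) := by
  by_contra hlt
  refine H.no_short_period (a := i) (D := i' - i) (n := n) (by omega) (by omega) fun t ht => ?_
  rw [hi t ht, show i + (i' - i) + t = i' + t by omega, hi' t ht]

lemma exists_occ (H : Balanced σ x κ) {n : ℕ} (hn : 1 ≤ n) (i : ℕ) :
    ∃ i', i < i' ∧ i' ≤ i + κ ^ 2 * n ∧ Occ x n i' := by
  obtain ⟨l', h1, h2, h3⟩ := H.recur n hn (i + 1) 0
  exact ⟨l', by omega, by omega, by simpa [Occ] using h3⟩

end Balanced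

/-! ### Counting extensions of a prefix -/

/-- The set of words of length `m` read at the positions `i + a`, for `i ∈ I`. -/
noncomputable def words [Fintype A] (x : ℕ → A) (I : Set ℕ) (a m : ℕ) : Finset (List A) :=
  ((List.finite_length_eq A m).subset (t := (fun i => factorAt x (i + a) m) '' I)
    (by rintro _ ⟨i, -, rfl⟩; simp)).toFinset

lemma mem_words [Fintype A] {x : ℕ → A} {I : Set ℕ} {a m : ℕ} {w : List A} :
    w ∈ words x I a m ↔ ∃ i ∈ I, factorAt x (i + a) m = w := by
  simp [words]

lemma card_words_le [Fintype A] {x : ℕ → A} {I : Set ℕ} {a m b n : ℕ}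
    (h : ∀ i ∈ I, ∀ i' ∈ I, factorAt x (i + a) m = factorAt x (i' + a) m →
      factorAt x (i + b) n = factorAt x (i' + b) n) :
    (words x I b n).card ≤ (words x I a m).card := by
  classical
  have hch : ∀ w : List A, ∃ i, w ∈ words x I b n → i ∈ I ∧ factorAt x (i + b) n = w := by
    intro w
    by_cases hw : w ∈ words x I b n
    · obtain ⟨i, hi⟩ := mem_words.1 hw
      exact ⟨i, fun _ => hi⟩
    · exact ⟨0, fun h => absurd h hw⟩
  choose φ hφ using hch
  refine Finset.card_le_card_of_injOn (fun w => factorAt x (φ w + a) m) ?_ ?_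
  · intro w hw
    exact mem_words.2 ⟨φ w, (hφ w hw).1, rfl⟩
  · intro w hw w' hw' heq
    rw [← (hφ w hw).2, ← (hφ w' hw').2]
    exact h _ (hφ w hw).1 _ (hφ w' hw').1 heq

namespace Balanced

variable [Fintype A] [Nonempty A] {σ : A → List A} {x : ℕ → A} {κ : ℕ}

lemma card_factors_le (H : Balanced σ x κ) {m : ℕ} (hm : 1 ≤ m) :
    (words x Set.univ 0 m).card ≤ κ ^ 2 * m := by
  classical
  have : words x Set.univ 0 m ⊆ (Finset.range (κ ^ 2 * m)).image fun i => factorAt x i m := by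
    intro w hw
    obtain ⟨i, -, rfl⟩ := mem_words.1 hw
    obtain ⟨l, -, h2, h3⟩ := H.recur m hm 0 i
    exact Finset.mem_image.2 ⟨l, Finset.mem_range.2 (by omega), factorAt_eq_iff.2 h3⟩
  refine (Finset.card_le_card this).trans (Finset.card_image_le.trans ?_)
  rw [Finset.card_range]

/-- Each right extension of the prefix of length `n` by `δ` letters, except one, accounts for one
unit in the difference of the numbers of factors of lengths `m + 1` and `m`, as soon as `m ≤ n` is
large enough for the suffixes of length `m` of the successive extensions to be distinct. -/
lemma card_factors_step (H : Balanced σ x κ) {n m δ : ℕ} (hmn : m ≤ n)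
    (hm : κ ^ 2 * (δ + 1) + δ ≤ m) :
    (words x Set.univ 0 m).card + (words x {i | Occ x n i} 0 (n + δ)).card ≤
      (words x Set.univ 0 (m + 1)).card + 1 := by
  classical
  set I := {i | Occ x n i}
  have hI : ∀ i ∈ I, ∀ i' ∈ I, ∀ t < n, x (i + t) = x (i' + t) :=
    fun i hi i' hi' t ht => (hi t ht).trans (hi' t ht).symm
  let Y : ℕ → Finset (List A) := fun c => words x I (n - m + c) m
  let Z : ℕ → Finset (List A) := fun c => words x I (n - m + c) (m + 1)
  have hsuf : ∀ c b, c < δ → b ≤ 1 → ∀ i ∈ I, ∀ i' ∈ I,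
      (factorAt x (i + (n - m + c)) (m + b) = factorAt x (i' + (n - m + c)) (m + b) ↔
        factorAt x (i + 0) (n + (c + b)) = factorAt x (i' + 0) (n + (c + b))) := by
    intro c b hc hb i hi i' hi'
    rw [factorAt_eq_iff, factorAt_eq_iff]
    constructor
    · intro h t ht
      by_cases htn : t < n
      · exact hI i hi i' hi' t htn
      · have := h (t - (n - m + c)) (by omega)
        convert this using 2 <;> omega
    · intro h t ht
      have := h (n - m + c + t) (by omega)
      convert this using 2 <;> omega
  have hY : ∀ c < δ, (Y c).card = (words x I 0 (n + c)).card := fun c hc =>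
    le_antisymm (card_words_le fun i hi i' hi' => (hsuf c 0 hc (by omega) i hi i' hi').2)
      (card_words_le fun i hi i' hi' => (hsuf c 0 hc (by omega) i hi i' hi').1)
  have hZ : ∀ c < δ, (Z c).card = (words x I 0 (n + (c + 1))).card := fun c hc =>
    le_antisymm (card_words_le fun i hi i' hi' => (hsuf c 1 hc le_rfl i hi i' hi').2)
      (card_words_le fun i hi i' hi' => (hsuf c 1 hc le_rfl i hi i' hi').1)
  -- the sets `Y c` are disjoint, since a common element would give the prefix a short period
  have hdis : ∀ c c', c < c' → c' < δ → ∀ w, w ∈ Y c → w ∈ Y c' → False := by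
    intro c c' hcc hc' w hw hw'
    obtain ⟨i, hi, rfl⟩ := mem_words.1 hw
    obtain ⟨i', hi', he⟩ := mem_words.1 hw'
    rw [factorAt_eq_iff] at he
    have hκ : κ ^ 2 * (c' - c + 1) ≤ κ ^ 2 * (δ + 1) := Nat.mul_le_mul_left _ (by omega)
    refine H.no_short_period (a := n - m + c) (D := c' - c) (n := m - c') (by omega) (by omega) ?_
    intro t ht
    have h1 := hi (n - m + c + t) (by omega)
    have h2 := hi' (n - m + c + (c' - c) + t) (by omega)
    rw [← h1, ← h2]
    have := (he t (by omega)).symm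
    convert this using 2 <;> omega
  have hdisY : ∀ c ∈ Finset.range δ, ∀ c' ∈ Finset.range δ, c ≠ c' → Disjoint (Y c) (Y c') := by
    intro c hc c' hc' hne
    rw [Finset.mem_range] at hc hc'
    refine Finset.disjoint_left.2 fun w hw hw' => ?_
    rcases lt_or_gt_of_ne hne with h | h
    · exact hdis c c' h hc' w hw hw'
    · exact hdis c' c h hc w hw' hw
  have htake : ∀ c w, w ∈ Z c → w.take m ∈ Y c := by
    intro c w hw
    obtain ⟨i, hi, rfl⟩ := mem_words.1 hw
    exact mem_words.2 ⟨i, hi, (factorAt_take _ _ (by omega)).symm⟩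
  have hdisZ : ∀ c ∈ Finset.range δ, ∀ c' ∈ Finset.range δ, c ≠ c' → Disjoint (Z c) (Z c') := by
    intro c hc c' hc' hne
    refine Finset.disjoint_left.2 fun w hw hw' => ?_
    exact Finset.disjoint_left.1 (hdisY c hc c' hc' hne) (htake c w hw) (htake c' w hw')
  set Yall := (Finset.range δ).biUnion Y
  set Zall := (Finset.range δ).biUnion Z
  have hYc : Yall.card = ∑ c ∈ Finset.range δ, (words x I 0 (n + c)).card := by
    rw [Finset.card_biUnion hdisY]
    exact Finset.sum_congr rfl fun c hc => hY c (Finset.mem_range.1 hc)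
  have hZc : Zall.card = ∑ c ∈ Finset.range δ, (words x I 0 (n + (c + 1))).card := by
    rw [Finset.card_biUnion hdisZ]
    exact Finset.sum_congr rfl fun c hc => hZ c (Finset.mem_range.1 hc)
  have htel : Zall.card + (words x I 0 (n + 0)).card =
      Yall.card + (words x I 0 (n + δ)).card := by
    rw [hYc, hZc, ← Finset.sum_range_succ (fun c => (words x I 0 (n + c)).card),
      Finset.sum_range_succ']
  have hone : (words x I 0 (n + 0)).card ≤ 1 := by
    refine Finset.card_le_one.2 fun w hw w' hw' => ?_
    obtain ⟨i, hi, rfl⟩ := mem_words.1 hw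
    obtain ⟨i', hi', rfl⟩ := mem_words.1 hw'
    exact factorAt_eq_iff.2 (hI i hi i' hi')
  have hYsub : Yall ⊆ words x Set.univ 0 m := by
    intro w hw
    obtain ⟨c, -, hc⟩ := Finset.mem_biUnion.1 hw
    obtain ⟨i, -, rfl⟩ := mem_words.1 hc
    exact mem_words.2 ⟨i + (n - m + c), trivial, rfl⟩
  have hZsub : Zall ⊆ words x Set.univ 0 (m + 1) := by
    intro w hw
    obtain ⟨c, -, hc⟩ := Finset.mem_biUnion.1 hw
    obtain ⟨i, -, rfl⟩ := mem_words.1 hc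
    exact mem_words.2 ⟨i + (n - m + c), trivial, rfl⟩
  have hrest : (words x Set.univ 0 m \ Yall).card ≤
      (words x Set.univ 0 (m + 1) \ Zall).card := by
    refine Finset.card_le_card_of_surjOn (List.take m) ?_
    intro w hw
    rw [Finset.mem_coe, Finset.mem_sdiff] at hw
    obtain ⟨i, -, rfl⟩ := mem_words.1 hw.1
    refine ⟨factorAt x (i + 0) (m + 1), ?_, factorAt_take _ _ (by omega)⟩
    rw [Finset.mem_coe, Finset.mem_sdiff]
    refine ⟨mem_words.2 ⟨i, trivial, rfl⟩, fun hz => hw.2 ?_⟩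
    obtain ⟨c, hc, hc'⟩ := Finset.mem_biUnion.1 hz
    have := htake c _ hc'
    rw [factorAt_take _ _ (by omega)] at this
    exact Finset.mem_biUnion.2 ⟨c, hc, this⟩
  have e1 := Finset.card_sdiff_add_card_eq_card hYsub
  have e2 := Finset.card_sdiff_add_card_eq_card hZsub
  omega

/-- A prefix of length `n` has at most `2 * κ ^ 2 + 1` extensions by `δ` letters, if `δ` is small
compared with `n`: otherwise `x` would have too many factors of length `n + 1`. -/
lemma card_extensions_le (H : Balanced σ x κ) {n δ : ℕ}
    (hn : 2 * (κ ^ 2 * (δ + 1) + δ) ≤ n) :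
    (words x {i | Occ x n i} 0 (n + δ)).card ≤ 2 * κ ^ 2 + 1 := by
  set c := (words x {i | Occ x n i} 0 (n + δ)).card
  set m₀ := κ ^ 2 * (δ + 1) + δ with hm₀
  by_contra hlt
  have hsum : ∀ t, m₀ + t ≤ n + 1 →
      (2 * κ ^ 2 + 1) * t ≤ (words x Set.univ 0 (m₀ + t)).card := by
    intro t
    induction t with
    | zero => intro _; omega
    | succ t ih =>
      intro ht
      have h1 := H.card_factors_step (n := n) (m := m₀ + t) (δ := δ) (by omega) (by omega)
      have h2 := ih (by omega)
      rw [Nat.mul_succ]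
      change _ ≤ (words x Set.univ 0 (m₀ + t + 1)).card
      omega
  have h1 := hsum (n + 1 - m₀) (by omega)
  rw [show m₀ + (n + 1 - m₀) = n + 1 by omega] at h1
  have h2 := H.card_factors_le (m := n + 1) (by omega)
  have h3 : n + 1 ≤ 2 * (n + 1 - m₀) := by omega
  nlinarith [Nat.mul_le_mul_left (κ ^ 2) h3]

end Balanced

/-! ### Comparing levels -/

open Classical in
/-- The occurrences, in the window formed by the first `12 κ⁸ (κ² + 1)` blocks of level `k`, of the
prefix formed by the first `l` blocks of level `k`. -/
noncomputable def winOcc (σ : A → List A) (x : ℕ → A) (κ l k : ℕ) : Finset ℕ :=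
  (Finset.range (pos (substIter σ k) x ((κ ^ 2 + 1) * (12 * κ ^ 8)))).filter
    (Occ x (pos (substIter σ k) x l))

open Classical in
/-- The words read in `x` between two positions of `winOcc σ x κ l k`. -/
noncomputable def winWords (σ : A → List A) (x : ℕ → A) (κ l k : ℕ) : Finset (List A) :=
  (winOcc σ x κ l k ×ˢ winOcc σ x κ l k).image fun p => factorAt x p.1 (p.2 - p.1)

lemma mem_winOcc {σ : A → List A} {x : ℕ → A} {κ l k i : ℕ} :
    i ∈ winOcc σ x κ l k ↔ i < pos (substIter σ k) x ((κ ^ 2 + 1) * (12 * κ ^ 8)) ∧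
      Occ x (pos (substIter σ k) x l) i := by
  simp [winOcc]

namespace Balanced

variable [Fintype A] [Nonempty A] {σ : A → List A} {x : ℕ → A} {κ l : ℕ}

lemma kpow_pos (H : Balanced σ x κ) (n : ℕ) : 1 ≤ κ ^ n :=
  Nat.one_le_pow _ _ (by have := H.four_le; omega)

lemma pos_le_mul (H : Balanced σ x κ) (k l : ℕ) :
    pos (substIter σ k) x l ≤ l * κ * minSize (substIter σ k) := by
  have h := pos_add_le (substIter σ k) x 0 l
  rw [pos_zero, Nat.zero_add, Nat.zero_add] at h
  have := Nat.mul_le_mul_left l (H.balance k)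
  rw [Nat.mul_assoc]
  omega

lemma mul_le_pos (σ : A → List A) (x : ℕ → A) (k l : ℕ) :
    l * minSize (substIter σ k) ≤ pos (substIter σ k) x l := by
  have h := le_pos_add (substIter σ k) x 0 l
  rw [pos_zero, Nat.zero_add, Nat.zero_add] at h
  exact h

/-- Every run of `12 κ⁸` blocks has a copy in the window. -/
lemma exists_window_copy (H : Balanced σ x κ) (b : ℕ) :
    ∃ b', b' + 12 * κ ^ 8 ≤ (κ ^ 2 + 1) * (12 * κ ^ 8) ∧
      ∀ t < 12 * κ ^ 8, x (b + t) = x (b' + t) := by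
  have h8 := H.kpow_pos 8
  obtain ⟨b', -, h2, h3⟩ := H.recur (12 * κ ^ 8) (by omega) 0 b
  refine ⟨b', ?_, fun t ht => (h3 t ht).symm⟩
  rw [Nat.add_mul, Nat.one_mul]
  omega

/-- Starting from a given block, `12 κ⁸` blocks are enough to see a prefix of `l` blocks and its
next few occurrences. -/
lemma reach (H : Balanced σ x κ) (hl : l < 6 * κ ^ 5) (k b : ℕ) :
    pos (substIter σ k) x (b + 1) + pos (substIter σ k) x l +
      6 * κ ^ 8 * minSize (substIter σ k) ≤ pos (substIter σ k) x (b + 12 * κ ^ 8) := by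
  have h1 := H.pos_le_mul k l
  have h8 := H.kpow_pos 8
  have h2 := le_pos_add (substIter σ k) x (b + 1) (12 * κ ^ 8 - 1)
  rw [show b + 1 + (12 * κ ^ 8 - 1) = b + 12 * κ ^ 8 by omega] at h2
  have h3 : l * κ + 6 * κ ^ 8 ≤ 12 * κ ^ 8 - 1 := by
    have h4 : l * κ ≤ 6 * κ ^ 5 * κ := Nat.mul_le_mul_right _ hl.le
    have h5 : 6 * κ ^ 5 * κ = 6 * κ ^ 6 := by ring
    have h6 : κ ^ 8 = κ ^ 6 * κ ^ 2 := by ring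
    have h7 : 4 ^ 2 ≤ κ ^ 2 := Nat.pow_le_pow_left H.four_le 2
    have h9 := H.kpow_pos 6
    have : κ ^ 6 * 4 ^ 2 ≤ κ ^ 8 := h6 ▸ Nat.mul_le_mul_left _ h7
    omega
  have h4 := Nat.mul_le_mul_right (minSize (substIter σ k)) h3
  rw [Nat.add_mul] at h4
  omega

/-- Two distinct occurrences of the prefix formed by `l` blocks are more than a block apart. -/
lemma far_occ (H : Balanced σ x κ) (hl : 6 * κ ^ 4 ≤ l) {k i i' : ℕ}
    (hi : Occ x (pos (substIter σ k) x l) i) (hi' : Occ x (pos (substIter σ k) x l) i')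
    (h : i < i') : mSize (substIter σ k) < i' - i := by
  by_contra hlt
  have h1 := H.lt_of_occ hi hi' h
  have h2 := mul_le_pos σ x k l
  have h3 := H.balance k
  have h4 := H.one_le_min k
  set q := minSize (substIter σ k)
  have h5 : κ ^ 2 * (i' - i + 1) ≤ κ ^ 2 * (2 * κ * q) := by
    refine Nat.mul_le_mul_left _ ?_
    have := H.four_le
    nlinarith
  have h6 : κ ^ 2 * (2 * κ * q) = 2 * κ ^ 3 * q := by ring
  have h7 : 2 * κ ^ 3 * q ≤ 6 * κ ^ 4 * q := by
    refine Nat.mul_le_mul_right _ ?_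
    have : κ ^ 4 = κ ^ 3 * κ := by ring
    have := H.four_le
    nlinarith [H.kpow_pos 3]
  have h8 := Nat.mul_le_mul_right q hl
  omega

lemma card_winOcc_le (H : Balanced σ x κ) (hl : 6 * κ ^ 4 ≤ l) (k : ℕ) :
    (winOcc σ x κ l k).card ≤ (κ ^ 2 + 1) * (12 * κ ^ 8) := by
  have hblk := fun i => exists_block (H.mono k) pos_zero i
  choose φ hφ1 hφ2 using hblk
  rw [← Finset.card_range ((κ ^ 2 + 1) * (12 * κ ^ 8))]
  refine Finset.card_le_card_of_injOn φ ?_ ?_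
  · intro i hi
    rw [Finset.mem_coe, Finset.mem_range]
    exact (H.mono k).lt_iff_lt.1 ((hφ1 i).trans_lt (mem_winOcc.1 hi).1)
  · have key : ∀ i ∈ winOcc σ x κ l k, ∀ i' ∈ winOcc σ x κ l k, φ i = φ i' → ¬ i < i' := by
      intro i hi i' hi' h hlt
      have h1 := H.far_occ hl (mem_winOcc.1 hi).2 (mem_winOcc.1 hi').2 hlt
      have h2 := hφ1 i
      have h3 := hφ2 i'
      have h4 := pos_add_le (substIter σ k) x (φ i') 1
      rw [h] at h2
      omega
    intro i hi i' hi' h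
    exact le_antisymm (not_lt.1 (key i' hi' i hi h.symm)) (not_lt.1 (key i hi i' hi' h))

lemma card_winWords_le (H : Balanced σ x κ) (hl : 6 * κ ^ 4 ≤ l) (k : ℕ) :
    (winWords σ x κ l k).card ≤ ((κ ^ 2 + 1) * (12 * κ ^ 8)) ^ 2 := by
  classical
  refine Finset.card_image_le.trans ?_
  rw [Finset.card_product, pow_two]
  exact Nat.mul_le_mul (H.card_winOcc_le hl k) (H.card_winOcc_le hl k)

lemma pos_add_apply (H : Balanced σ x κ) (j k b : ℕ) :
    pos (substIter σ (j + k)) x b = pos (substIter σ j) x (pos (substIter σ k) x b) :=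
  pos_substIter_add H.fix j k b

lemma occ_up (H : Balanced σ x κ) {j k i : ℕ} (hi : Occ x (pos (substIter σ k) x l) i) :
    Occ x (pos (substIter σ (j + k)) x l) (pos (substIter σ j) x i) := by
  rw [H.pos_add_apply]
  exact hi.image (H.fixk j)

lemma image_winOcc (H : Balanced σ x κ) {j k : ℕ}
    (hF : (winOcc σ x κ l (j + k)).card = (winOcc σ x κ l k).card) :
    (winOcc σ x κ l k).image (pos (substIter σ j) x) = winOcc σ x κ l (j + k) := by
  refine Finset.eq_of_subset_of_card_le ?_ ?_
  · intro i' hi'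
    obtain ⟨i, hi, rfl⟩ := Finset.mem_image.1 hi'
    have hi := mem_winOcc.1 hi
    refine mem_winOcc.2 ⟨?_, H.occ_up hi.2⟩
    rw [H.pos_add_apply]
    exact H.mono j hi.1
  · rw [Finset.card_image_of_injective _ (H.mono j).injective, hF]

/-- The images under `σ ^ j` of the occurrences in the window of level `k` are occurrences in the
window of level `j + k`. If the two windows contain equally many occurrences, then all the
occurrences at level `j + k` come from level `k`. -/
lemma occ_down (H : Balanced σ x κ) (hl : l < 6 * κ ^ 5) {j k : ℕ}
    (hF : (winOcc σ x κ l (j + k)).card = (winOcc σ x κ l k).card) {i' : ℕ}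
    (hi' : Occ x (pos (substIter σ (j + k)) x l) i') :
    ∃ i, Occ x (pos (substIter σ k) x l) i ∧ i' = pos (substIter σ j) x i := by
  obtain ⟨b, hb1, hb2⟩ := exists_block (H.mono (j + k)) pos_zero i'
  obtain ⟨b', hb', hc⟩ := H.exists_window_copy b
  have h8 := H.kpow_pos 8
  have hr := H.reach hl (j + k) b
  have hr' := H.reach hl k b'
  have h1 := pos_copy (τ := substIter σ (j + k)) hc (s := 1) (by omega)
  have h1k := pos_copy (τ := substIter σ k) hc (s := 1) (by omega)
  have h2 : pos (substIter σ (j + k)) x (b' + 1) ≤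
      pos (substIter σ (j + k)) x ((κ ^ 2 + 1) * (12 * κ ^ 8)) := (H.mono _).monotone (by omega)
  -- the copy of `i'` in the window
  obtain ⟨e, he⟩ := Nat.exists_eq_add_of_le hb1
  have hi'' : pos (substIter σ (j + k)) x b' + e ∈ winOcc σ x κ l (j + k) := by
    refine mem_winOcc.2 ⟨by omega, fun t ht => ?_⟩
    rw [← hi' t ht, he, Nat.add_assoc, Nat.add_assoc]
    exact (letter_copy (H.fixk (j + k)) hc (by omega)).symm
  rw [← H.image_winOcc hF] at hi''
  obtain ⟨i₀, hi₀, he₀⟩ := Finset.mem_image.1 hi''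
  have hi₀ := (mem_winOcc.1 hi₀).2
  have h3 : pos (substIter σ k) x b' ≤ i₀ := by
    rw [← (H.mono j).le_iff_le, ← H.pos_add_apply, he₀]
    omega
  have h4 : i₀ < pos (substIter σ k) x (b' + 1) := by
    rw [← (H.mono j).lt_iff_lt, ← H.pos_add_apply, he₀]
    omega
  obtain ⟨s, rfl⟩ := Nat.exists_eq_add_of_le h3
  have hc' : ∀ t < 12 * κ ^ 8, x (b' + t) = x (b + t) := fun t ht => (hc t ht).symm
  have hcopy : ∀ t < pos (substIter σ k) x (b' + 12 * κ ^ 8) - pos (substIter σ k) x b',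
      x (pos (substIter σ k) x b' + t) = x (pos (substIter σ k) x b + t) :=
    fun t ht => letter_copy (H.fixk k) hc' (by omega)
  refine ⟨pos (substIter σ k) x b + s, fun t ht => ?_, ?_⟩
  · rw [← hi₀ t ht, Nat.add_assoc, Nat.add_assoc]
    exact (hcopy _ (by omega)).symm
  · have h5 := pos_copy (τ := substIter σ j) hcopy (s := s) (by omega)
    rw [← H.pos_add_apply, ← H.pos_add_apply] at h5
    omega

/-- The word between two occurrences that are not too far apart is seen in the window. -/
lemma mem_winWords (H : Balanced σ x κ) (hl : l < 6 * κ ^ 5) {k i i' : ℕ}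
    (hi : Occ x (pos (substIter σ k) x l) i) (hi' : Occ x (pos (substIter σ k) x l) i')
    (hle : i ≤ i') (hgap : i' ≤ i + 6 * κ ^ 8 * minSize (substIter σ k)) :
    factorAt x i (i' - i) ∈ winWords σ x κ l k := by
  obtain ⟨b, hb1, hb2⟩ := exists_block (H.mono k) pos_zero i
  obtain ⟨b', hb', hc⟩ := H.exists_window_copy b
  have h8 := H.kpow_pos 8
  have hr := H.reach hl k b
  have h1 := pos_copy (τ := substIter σ k) hc (s := 12 * κ ^ 8) le_rfl
  have h2 : pos (substIter σ k) x (b' + 12 * κ ^ 8) ≤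
      pos (substIter σ k) x ((κ ^ 2 + 1) * (12 * κ ^ 8)) := (H.mono _).monotone hb'
  obtain ⟨e, rfl⟩ := Nat.exists_eq_add_of_le hb1
  obtain ⟨f, rfl⟩ := Nat.exists_eq_add_of_le hle
  have hw : ∀ d, d ≤ f → Occ x (pos (substIter σ k) x l) (pos (substIter σ k) x b + e + d) →
      pos (substIter σ k) x b' + e + d ∈ winOcc σ x κ l k := by
    intro d hd ho
    refine mem_winOcc.2 ⟨by omega, fun t ht => ?_⟩
    rw [← ho t ht, Nat.add_assoc, Nat.add_assoc, Nat.add_assoc, Nat.add_assoc]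
    exact (letter_copy (H.fixk k) hc (by omega)).symm
  classical
  refine Finset.mem_image.2
    ⟨(pos (substIter σ k) x b' + e, pos (substIter σ k) x b' + e + f),
      Finset.mem_product.2 ⟨hw 0 (by omega) hi, hw f le_rfl hi'⟩, ?_⟩
  simp only [Nat.add_sub_cancel_left]
  refine factorAt_eq_iff.2 fun t ht => ?_
  rw [Nat.add_assoc, Nat.add_assoc]
  exact (letter_copy (H.fixk k) hc (by omega)).symm

/-- If the windows of levels `k` and `j + k` contain equally many occurrences and equally many
words between them, then `σ ^ j` is injective on these words. -/
lemma injOn_winWords (H : Balanced σ x κ) {j k : ℕ}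
    (hF : (winOcc σ x κ l (j + k)).card = (winOcc σ x κ l k).card)
    (hN : (winWords σ x κ l (j + k)).card = (winWords σ x κ l k).card) :
    Set.InjOn (apply (substIter σ j)) (winWords σ x κ l k : Set (List A)) := by
  classical
  have him : (winWords σ x κ l k).image (apply (substIter σ j)) = winWords σ x κ l (j + k) := by
    have e : ∀ p : ℕ × ℕ, apply (substIter σ j) (factorAt x p.1 (p.2 - p.1)) =
        factorAt x (pos (substIter σ j) x p.1)
          (pos (substIter σ j) x p.2 - pos (substIter σ j) x p.1) :=
      fun p => (factorAt_image (H.fixk j) (H.mono j) _ _).symm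
    ext w
    simp only [winWords, ← H.image_winOcc hF, Finset.mem_image, Finset.mem_product, Prod.exists]
    constructor
    · rintro ⟨_, ⟨i, i', ⟨hi, hi'⟩, rfl⟩, rfl⟩
      exact ⟨_, _, ⟨⟨i, hi, rfl⟩, ⟨i', hi', rfl⟩⟩, (e (i, i')).symm⟩
    · rintro ⟨_, _, ⟨⟨i, hi, rfl⟩, ⟨i', hi', rfl⟩⟩, rfl⟩
      exact ⟨_, ⟨i, i', ⟨hi, hi'⟩, rfl⟩, e (i, i')⟩
  exact Finset.card_image_iff.1 (by rw [him, hN])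

end Balanced

/-! ### Return substitutions within a class of levels -/

/-- The extensions, by `κ |σ ^ k|` letters, of the prefix formed by the first `l` blocks of
level `k`, at those occurrences whose image under `σ ^ j` is an occurrence of the prefix of
length `n`. -/
noncomputable def extSet [Fintype A] (σ : A → List A) (x : ℕ → A) (κ l k j n : ℕ) :
    Finset (List A) :=
  words x {i | Occ x (pos (substIter σ k) x l) i ∧ Occ x n (pos (substIter σ j) x i)} 0
    (pos (substIter σ k) x l + κ * mSize (substIter σ k))

namespace Balanced

variable [Fintype A] [Nonempty A] {σ : A → List A} {x : ℕ → A} {κ l : ℕ}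

/-- Whether the image under `σ ^ j` of an occurrence is an occurrence of the prefix of length `n`
can be read on the extension at that occurrence. -/
lemma mem_extSet_iff (H : Balanced σ x κ) {k j n i : ℕ}
    (hn : n < pos (substIter σ (j + k)) x (l + 1)) (hi : Occ x (pos (substIter σ k) x l) i) :
    factorAt x i (pos (substIter σ k) x l + κ * mSize (substIter σ k)) ∈
      extSet σ x κ l k j n ↔ Occ x n (pos (substIter σ j) x i) := by
  constructor
  · intro h
    obtain ⟨i₂, ⟨hi₂, ho⟩, heq⟩ := mem_words.1 h
    rw [Nat.add_zero, factorAt_eq_iff] at heq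
    intro t ht
    rw [← ho t ht]
    refine (letter_copy (H.fixk j) heq ?_).symm
    rw [← Nat.add_assoc]
    have h1 := pos_of_occ (τ := substIter σ j) hi₂ le_rfl
    rw [← H.pos_add_apply] at h1
    have h2 := le_pos_add (substIter σ j) x (i₂ + pos (substIter σ k) x l)
      (κ * mSize (substIter σ k))
    have h3 := pos_add_le (substIter σ (j + k)) x l 1
    have h4 := mSize_substIter_add σ j k
    have h5 := Nat.mul_le_mul_right (mSize (substIter σ k)) (H.balance j)
    have h6 : κ * mSize (substIter σ k) * minSize (substIter σ j) =
      κ * minSize (substIter σ j) * mSize (substIter σ k) := by ring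
    omega
  · exact fun h => mem_words.2 ⟨i, ⟨hi, h⟩, rfl⟩

/-- Two prefixes whose levels belong to the same class, and which select the same extensions, have
the same return substitution. -/
lemma returnSubst_eq_of_extSet (H : Balanced σ x κ) (hl1 : 6 * κ ^ 4 ≤ l) (hl2 : l < 6 * κ ^ 5)
    {k j e n n' : ℕ}
    (hFj : (winOcc σ x κ l (j + k)).card = (winOcc σ x κ l k).card)
    (hFe : (winOcc σ x κ l (e + (j + k))).card = (winOcc σ x κ l (j + k)).card)
    (hNe : (winWords σ x κ l (e + (j + k))).card = (winWords σ x κ l (j + k)).card)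
    (hn1 : pos (substIter σ (j + k)) x l ≤ n) (hn2 : n < pos (substIter σ (j + k)) x (l + 1))
    (hn1' : pos (substIter σ (e + (j + k))) x l ≤ n')
    (hn2' : n' < pos (substIter σ (e + (j + k))) x (l + 1))
    (hS : extSet σ x κ l k j n = extSet σ x κ l k (e + j) n') :
    returnSubst σ x (factorAt x 0 n) = returnSubst σ x (factorAt x 0 n') := by
  have hn : 1 ≤ n := by
    have h1 := mul_le_pos σ x (j + k) l
    have h2 := Nat.mul_le_mul hl1 (H.one_le_min (j + k))
    have h3 := H.kpow_pos 4
    omega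
  have hgap : ∀ i i', SuccessiveOccs x (factorAt x 0 n) i i' →
      i' ≤ i + 6 * κ ^ 8 * minSize (substIter σ (j + k)) := by
    intro i i' h
    obtain ⟨p, hp1, hp2, hp3⟩ := H.exists_occ hn i
    have h1 : i' ≤ p := by
      by_contra hlt
      exact h.2.2.2 p hp1 (by omega) (occ_iff.1 hp3)
    have h2 := H.pos_le_mul (j + k) (l + 1)
    have h3 : κ ^ 2 * n ≤
        κ ^ 2 * ((l + 1) * κ * minSize (substIter σ (j + k))) :=
      Nat.mul_le_mul_left _ (by omega)
    have h4 : κ ^ 2 * ((l + 1) * κ * minSize (substIter σ (j + k))) ≤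
        κ ^ 2 * (6 * κ ^ 5 * κ * minSize (substIter σ (j + k))) :=
      Nat.mul_le_mul_left _ (Nat.mul_le_mul_right _ (Nat.mul_le_mul_right _ hl2))
    have h5 : κ ^ 2 * (6 * κ ^ 5 * κ * minSize (substIter σ (j + k))) =
        6 * κ ^ 8 * minSize (substIter σ (j + k)) := by ring
    omega
  refine returnSubst_congr H.fix e (H.mono e) (occ_iff.1 (occ_zero x n)) ?_ ?_ ?_
  · intro i
    obtain ⟨i', h1, -, h2⟩ := H.exists_occ hn i
    exact ⟨i', h1, occ_iff.1 h2⟩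
  · intro i'
    simp only [← occ_iff]
    have hFej : (winOcc σ x κ l (e + j + k)).card = (winOcc σ x κ l k).card := by
      rw [Nat.add_assoc, hFe, hFj]
    rw [← Nat.add_assoc] at hn1' hn2'
    constructor
    · intro ho
      obtain ⟨i, hi, rfl⟩ := H.occ_down hl2 hFej (ho.mono hn1')
      refine ⟨pos (substIter σ j) x i, ?_, H.pos_add_apply e j i⟩
      rw [← H.mem_extSet_iff hn2 hi, hS, H.mem_extSet_iff hn2' hi]
      exact ho
    · rintro ⟨i'', ho, rfl⟩
      obtain ⟨i, hi, rfl⟩ := H.occ_down hl2 hFj (ho.mono hn1)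
      rw [← H.pos_add_apply, ← H.mem_extSet_iff hn2' hi, ← hS, H.mem_extSet_iff hn2 hi]
      exact ho
  · intro i₁ i₁' i₂ i₂' h1 h2 heq
    rw [factorAt_image (H.fixk e) (H.mono e), factorAt_image (H.fixk e) (H.mono e)] at heq
    have hmem : ∀ i i', SuccessiveOccs x (factorAt x 0 n) i i' →
        factorAt x i (i' - i) ∈ winWords σ x κ l (j + k) := fun i i' h =>
      H.mem_winWords hl2 ((occ_iff.2 h.2.1).mono hn1) ((occ_iff.2 h.2.2.1).mono hn1) h.1.le
        (hgap i i' h)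
    exact H.injOn_winWords hFe hNe (hmem _ _ h1) (hmem _ _ h2) heq

/-- Within the class of levels `k` having `F` occurrences and `N` words in their window, the
prefixes made of `l` blocks of level `k` and a part of the next one have at most `2 ^ (2 κ² + 1)`
return substitutions. The statement provides codes for these substitutions. -/
lemma exists_code (H : Balanced σ x κ) (hl1 : 6 * κ ^ 4 ≤ l) (hl2 : l < 6 * κ ^ 5) (F N : ℕ) :
    ∃ c : ℕ → ℕ → ℕ, ∀ k n, (winOcc σ x κ l k).card = F → (winWords σ x κ l k).card = N →
      pos (substIter σ k) x l ≤ n → n < pos (substIter σ k) x (l + 1) →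
      c k n < 2 ^ (2 * κ ^ 2 + 1) ∧
      ∀ k' n', (winOcc σ x κ l k').card = F → (winWords σ x κ l k').card = N →
        pos (substIter σ k') x l ≤ n' → n' < pos (substIter σ k') x (l + 1) →
        c k n = c k' n' →
        returnSubst σ x (factorAt x 0 n) = returnSubst σ x (factorAt x 0 n') := by
  classical
  by_cases hex : ∃ k, (winOcc σ x κ l k).card = F ∧ (winWords σ x κ l k).card = N
  swap
  · exact ⟨fun _ _ => 0, fun k n h1 h2 => absurd ⟨k, h1, h2⟩ hex⟩
  -- the least level of the class
  obtain ⟨k₁, ⟨hF1, hN1⟩, hmin⟩ : ∃ k₁, ((winOcc σ x κ l k₁).card = F ∧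
      (winWords σ x κ l k₁).card = N) ∧ ∀ k, (winOcc σ x κ l k).card = F →
      (winWords σ x κ l k).card = N → k₁ ≤ k :=
    ⟨Nat.find hex, Nat.find_spec hex, fun k h1 h2 => Nat.find_min' hex ⟨h1, h2⟩⟩
  set E := words x {i | Occ x (pos (substIter σ k₁) x l) i} 0
    (pos (substIter σ k₁) x l + κ * mSize (substIter σ k₁)) with hE
  have hEcard : E.card ≤ 2 * κ ^ 2 + 1 := by
    refine H.card_extensions_le ?_
    refine le_trans ?_ (mul_le_pos σ x k₁ l)
    refine le_trans ?_ (Nat.mul_le_mul_right _ hl1)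
    have h1 := Nat.mul_le_mul_left κ (H.balance k₁)
    have h2 := H.one_le_min k₁
    set q := minSize (substIter σ k₁)
    set δ := κ * mSize (substIter σ k₁)
    have h3 : κ ^ 2 * (δ + 1) + δ ≤ κ ^ 2 * (κ * (κ * q) + q) + κ * (κ * q) := by gcongr
    have h4 : κ ^ 2 * (κ * (κ * q) + q) + κ * (κ * q) = (κ ^ 4 + 2 * κ ^ 2) * q := by ring
    have h5 : κ ^ 4 + 2 * κ ^ 2 ≤ 3 * κ ^ 4 := by
      have := Nat.pow_le_pow_right (show 0 < κ by have := H.four_le; omega)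
        (show 2 ≤ 4 by omega)
      omega
    have h6 := Nat.mul_le_mul_right q h5
    have h7 : 6 * κ ^ 4 * q = 2 * (3 * κ ^ 4 * q) := by ring
    omega
  have hsub : ∀ j n, extSet σ x κ l k₁ j n ∈ E.powerset := by
    intro j n
    rw [Finset.mem_powerset]
    intro w hw
    obtain ⟨i, hi, rfl⟩ := mem_words.1 hw
    exact mem_words.2 ⟨i, hi.1, rfl⟩
  let c : ℕ → ℕ → ℕ := fun k n => (E.powerset.equivFin ⟨_, hsub (k - k₁) n⟩ : ℕ)
  have hcS : ∀ k n k' n', c k n = c k' n' →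
      extSet σ x κ l k₁ (k - k₁) n = extSet σ x κ l k₁ (k' - k₁) n' := by
    intro k n k' n' h
    have := E.powerset.equivFin.injective (Fin.ext h)
    exact congrArg Subtype.val this
  have key : ∀ k n k' n', k ≤ k' → (winOcc σ x κ l k).card = F →
      (winWords σ x κ l k).card = N → pos (substIter σ k) x l ≤ n →
      n < pos (substIter σ k) x (l + 1) → (winOcc σ x κ l k').card = F →
      (winWords σ x κ l k').card = N → pos (substIter σ k') x l ≤ n' →
      n' < pos (substIter σ k') x (l + 1) → c k n = c k' n' →
      returnSubst σ x (factorAt x 0 n) = returnSubst σ x (factorAt x 0 n') := by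
    intro k n k' n' hkk hF hN h1 h2 hF' hN' h1' h2' hc
    have hS := hcS _ _ _ _ hc
    obtain ⟨j, rfl⟩ := Nat.exists_eq_add_of_le' (hmin k hF hN)
    obtain ⟨e, rfl⟩ := Nat.exists_eq_add_of_le' hkk
    rw [Nat.add_sub_cancel, ← Nat.add_assoc, Nat.add_sub_cancel] at hS
    exact H.returnSubst_eq_of_extSet hl1 hl2 (hF.trans hF1.symm) (hF'.trans hF.symm)
      (hN'.trans hN.symm) h1 h2 h1' h2' hS
  refine ⟨c, fun k n hF hN h1 h2 => ⟨?_, fun k' n' hF' hN' h1' h2' hc => ?_⟩⟩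
  · refine (Fin.is_lt _).trans_le ?_
    rw [Finset.card_powerset]
    exact Nat.pow_le_pow_right (by omega) hEcard
  · rcases Nat.le_total k k' with h | h
    · exact key k n k' n' h hF hN h1 h2 hF' hN' h1' h2' hc
    · exact (key k' n' k n h hF' hN' h1' h2' hF hN h1 h2 hc.symm).symm

/-- A long prefix is made of `l` blocks of some level and a part of the next one, where `l` lies in
a fixed finite range. -/
lemma exists_level_decomp (H : Balanced σ x κ) {n : ℕ} (hn : 6 * κ ^ 4 ≤ n) :
    ∃ k l, 6 * κ ^ 4 ≤ l ∧ l < 6 * κ ^ 5 ∧ pos (substIter σ k) x l ≤ n ∧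
      n < pos (substIter σ k) x (l + 1) := by
  classical
  have hex : ∃ k, n < pos (substIter σ k) x (6 * κ ^ 4) := by
    obtain ⟨k, hk⟩ := H.growth (n + 1)
    refine ⟨k, ?_⟩
    have h1 := mul_le_pos σ x k (6 * κ ^ 4)
    have h2 := H.kpow_pos 4
    have h3 := Nat.le_mul_of_pos_left (minSize (substIter σ k)) (show 0 < 6 * κ ^ 4 by omega)
    omega
  have hspec := Nat.find_spec hex
  have hmin := fun m (hm : m < Nat.find hex) => Nat.find_min hex hm
  rcases hk : Nat.find hex with _ | k
  · rw [hk, pos_substIter_zero] at hspec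
    omega
  · rw [hk] at hspec hmin
    have h1 := hmin k (Nat.lt_succ_self k)
    rw [H.pos_add_apply k 1] at hspec
    obtain ⟨l, hl1, hl2⟩ := exists_block (H.mono k) pos_zero n
    refine ⟨k, l, ?_, ?_, hl1, hl2⟩
    · have : 6 * κ ^ 4 < l + 1 := (H.mono k).lt_iff_lt.1 ((not_lt.1 h1).trans_lt hl2)
      omega
    · have h2 := (H.mono k).lt_iff_lt.1 (hl1.trans_lt hspec)
      have h3 := pos_add_le (substIter σ 1) x 0 (6 * κ ^ 4)
      rw [pos_zero, Nat.zero_add, Nat.zero_add, mSize_substIter_one] at h3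
      have h4 := Nat.mul_le_mul_left (6 * κ ^ 4) H.size_le
      have h5 : 6 * κ ^ 4 * κ = 6 * κ ^ 5 := by ring
      omega

end Balanced

lemma card_image_le_of_code {α β γ : Type*} [DecidableEq β] (I : Set α) (f : α → β) (c : α → γ)
    (P : Finset γ) (hP : ∀ n ∈ I, c n ∈ P) (hc : ∀ n ∈ I, ∀ n' ∈ I, c n = c n' → f n = f n') :
    (f '' I).Finite ∧ (f '' I).ncard ≤ P.card := by
  classical
  have hch : ∀ y : f '' I, ∃ n, n ∈ I ∧ f n = y := fun y => y.2
  choose φ hφ1 hφ2 using hch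
  have hinj : Function.Injective fun y : f '' I => (⟨c (φ y), hP _ (hφ1 y)⟩ : P) := by
    intro y y' h
    have := hc _ (hφ1 y) _ (hφ1 y') (congrArg Subtype.val h)
    rw [hφ2, hφ2] at this
    exact Subtype.ext this
  have hfin : Finite (f '' I) := Finite.of_injective _ hinj
  refine ⟨Set.toFinite _, ?_⟩
  have := Nat.card_le_card_of_injective _ hinj
  rwa [Nat.card_coe_set_eq, Nat.card_eq_fintype_card, Fintype.card_coe] at this

/-- The counting bound, in terms of `κ`. -/
lemma Balanced.card_returnSubst_le [Fintype A] [Nonempty A] {σ : A → List A} {x : ℕ → A} {κ : ℕ}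
    (H : Balanced σ x κ) :
    (Set.range fun n => returnSubst σ x (factorAt x 0 n)).Finite ∧
    (Set.range fun n => returnSubst σ x (factorAt x 0 n)).ncard ≤ 6 * κ ^ 4 +
      6 * κ ^ 5 * (((κ ^ 2 + 1) * (12 * κ ^ 8) + 1) * ((((κ ^ 2 + 1) * (12 * κ ^ 8)) ^ 2 + 1) *
        2 ^ (2 * κ ^ 2 + 1))) := by
  classical
  set f := fun n => returnSubst σ x (factorAt x 0 n) with hf
  have hU : Set.range f = f '' {n | n < 6 * κ ^ 4} ∪ f '' {n | 6 * κ ^ 4 ≤ n} := by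
    rw [← Set.image_union, ← Set.image_univ]
    congr 1
    ext n
    simpa using lt_or_ge n (6 * κ ^ 4)
  have h1 := card_image_le_of_code {n | n < 6 * κ ^ 4} f id (Finset.range (6 * κ ^ 4))
    (fun n hn => Finset.mem_range.2 hn) (fun n _ n' _ h => congrArg f h)
  have hdec : ∀ n, ∃ p : ℕ × ℕ, 6 * κ ^ 4 ≤ n → 6 * κ ^ 4 ≤ p.2 ∧ p.2 < 6 * κ ^ 5 ∧
      pos (substIter σ p.1) x p.2 ≤ n ∧ n < pos (substIter σ p.1) x (p.2 + 1) := by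
    intro n
    by_cases hn : 6 * κ ^ 4 ≤ n
    · obtain ⟨k, l, h⟩ := H.exists_level_decomp hn
      exact ⟨(k, l), fun _ => h⟩
    · exact ⟨(0, 0), fun h => absurd h hn⟩
  choose p hp using hdec
  have hcode : ∀ l F N : ℕ, ∃ c : ℕ → ℕ → ℕ, 6 * κ ^ 4 ≤ l → l < 6 * κ ^ 5 →
      ∀ k n, (winOcc σ x κ l k).card = F → (winWords σ x κ l k).card = N →
      pos (substIter σ k) x l ≤ n → n < pos (substIter σ k) x (l + 1) →
      c k n < 2 ^ (2 * κ ^ 2 + 1) ∧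
      ∀ k' n', (winOcc σ x κ l k').card = F → (winWords σ x κ l k').card = N →
        pos (substIter σ k') x l ≤ n' → n' < pos (substIter σ k') x (l + 1) →
        c k n = c k' n' → f n = f n' := by
    intro l F N
    by_cases h : 6 * κ ^ 4 ≤ l ∧ l < 6 * κ ^ 5
    · obtain ⟨c, hc⟩ := H.exists_code h.1 h.2 F N
      exact ⟨c, fun _ _ => hc⟩
    · exact ⟨fun _ _ => 0, fun h1 h2 => absurd ⟨h1, h2⟩ h⟩
  choose c hc using hcode
  let F : ℕ → ℕ := fun n => (winOcc σ x κ (p n).2 (p n).1).card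
  let N : ℕ → ℕ := fun n => (winWords σ x κ (p n).2 (p n).1).card
  have h2 := card_image_le_of_code {n | 6 * κ ^ 4 ≤ n} f
    (fun n => ((p n).2, F n, N n, c (p n).2 (F n) (N n) (p n).1 n))
    (Finset.range (6 * κ ^ 5) ×ˢ Finset.range ((κ ^ 2 + 1) * (12 * κ ^ 8) + 1) ×ˢ
      Finset.range (((κ ^ 2 + 1) * (12 * κ ^ 8)) ^ 2 + 1) ×ˢ
      Finset.range (2 ^ (2 * κ ^ 2 + 1))) (by
      intro n hn
      obtain ⟨q1, q2, q3, q4⟩ := hp n hn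
      simp only [Finset.mem_product, Finset.mem_range]
      exact ⟨q2, Nat.lt_succ_of_le (H.card_winOcc_le q1 _),
        Nat.lt_succ_of_le (H.card_winWords_le q1 _), (hc _ _ _ q1 q2 _ _ rfl rfl q3 q4).1⟩) (by
      intro n hn n' hn' h
      obtain ⟨q1, q2, q3, q4⟩ := hp n hn
      obtain ⟨r1, r2, r3, r4⟩ := hp n' hn'
      simp only [Prod.mk.injEq] at h
      obtain ⟨e1, e2, e3, e4⟩ := h
      refine (hc (p n).2 (F n) (N n) q1 q2 (p n).1 n rfl rfl q3 q4).2 (p n').1 n' ?_ ?_ ?_ ?_ ?_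
      · rw [e1]; exact e2.symm
      · rw [e1]; exact e3.symm
      · rw [e1]; exact r3
      · rw [e1]; exact r4
      · rw [e4, e1, e2, e3])
  rw [Finset.card_range] at h1
  simp only [Finset.card_product, Finset.card_range] at h2
  rw [hU]
  exact ⟨h1.1.union h2.1, (Set.ncard_union_le _ _).trans (Nat.add_le_add h1.2 h2.2)⟩

/-! ### The numerical bound -/

/-- The count of `Balanced.card_returnSubst_le` in closed form: the polynomial factor is at most
`(4 κ³)^12`, hence at most `(4 κ³)^(κ²)`, and so is the number `2 ^ (2 κ² + 1)` of subsets. -/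
lemma count_le_pow {κ : ℕ} (h : 4 ≤ κ) :
    6 * κ ^ 4 + 6 * κ ^ 5 * (((κ ^ 2 + 1) * (12 * κ ^ 8) + 1) *
      ((((κ ^ 2 + 1) * (12 * κ ^ 8)) ^ 2 + 1) * 2 ^ (2 * κ ^ 2 + 1))) ≤
      (4 * κ ^ 3) ^ (2 * κ ^ 2 + 1) := by
  have hpos : ∀ m, 1 ≤ κ ^ m := fun m => Nat.one_le_pow _ _ (by omega)
  have h2 : 12 ≤ κ ^ 2 := by nlinarith
  have hM : (κ ^ 2 + 1) * (12 * κ ^ 8) ≤ 24 * κ ^ 10 := by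
    calc (κ ^ 2 + 1) * (12 * κ ^ 8) ≤ (κ ^ 2 + κ ^ 2) * (12 * κ ^ 8) := by
          gcongr; exact hpos 2
      _ = 24 * κ ^ 10 := by ring
  have hM1 : (κ ^ 2 + 1) * (12 * κ ^ 8) + 1 ≤ 25 * κ ^ 10 := by
    have := hpos 10
    omega
  have hM2 : ((κ ^ 2 + 1) * (12 * κ ^ 8)) ^ 2 + 1 ≤ 577 * κ ^ 20 := by
    calc ((κ ^ 2 + 1) * (12 * κ ^ 8)) ^ 2 + 1 ≤ (24 * κ ^ 10) ^ 2 + κ ^ 20 := by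
          gcongr; exact hpos 20
      _ = 577 * κ ^ 20 := by ring
  have hB : 1 ≤ 4 * κ ^ 3 := by have := hpos 3; omega
  have hpoly : 6 * κ ^ 4 + 6 * κ ^ 5 * ((25 * κ ^ 10) * (577 * κ ^ 20)) ≤ (4 * κ ^ 3) ^ κ ^ 2 := by
    calc 6 * κ ^ 4 + 6 * κ ^ 5 * ((25 * κ ^ 10) * (577 * κ ^ 20))
        ≤ 6 * κ ^ 36 + 86550 * κ ^ 36 := by
          have e1 : κ ^ 4 ≤ κ ^ 36 := Nat.pow_le_pow_right (by omega) (by norm_num)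
          have e2 : κ ^ 35 ≤ κ ^ 36 := Nat.pow_le_pow_right (by omega) (by norm_num)
          have e3 : 6 * κ ^ 5 * ((25 * κ ^ 10) * (577 * κ ^ 20)) = 86550 * κ ^ 35 := by ring
          omega
      _ ≤ 16777216 * κ ^ 36 := by omega
      _ = (4 * κ ^ 3) ^ 12 := by ring
      _ ≤ (4 * κ ^ 3) ^ κ ^ 2 := Nat.pow_le_pow_right hB h2
  have htwo : 2 ^ (2 * κ ^ 2 + 1) ≤ (4 * κ ^ 3) ^ κ ^ 2 := by
    calc 2 ^ (2 * κ ^ 2 + 1) ≤ 2 ^ (3 * κ ^ 2) := Nat.pow_le_pow_right (by norm_num) (by omega)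
      _ = 8 ^ κ ^ 2 := by rw [pow_mul]; norm_num
      _ ≤ (4 * κ ^ 3) ^ κ ^ 2 := by
          apply Nat.pow_le_pow_left
          have : 2 ^ 3 ≤ κ ^ 3 := Nat.pow_le_pow_left (by omega) 3
          omega
  have h1 : 1 ≤ 2 ^ (2 * κ ^ 2 + 1) := Nat.one_le_two_pow
  calc 6 * κ ^ 4 + 6 * κ ^ 5 * (((κ ^ 2 + 1) * (12 * κ ^ 8) + 1) *
        ((((κ ^ 2 + 1) * (12 * κ ^ 8)) ^ 2 + 1) * 2 ^ (2 * κ ^ 2 + 1)))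
      ≤ 6 * κ ^ 4 * 2 ^ (2 * κ ^ 2 + 1) + 6 * κ ^ 5 * ((25 * κ ^ 10) *
        ((577 * κ ^ 20) * 2 ^ (2 * κ ^ 2 + 1))) := by
        exact Nat.add_le_add (Nat.le_mul_of_pos_right _ h1) (by gcongr)
    _ = (6 * κ ^ 4 + 6 * κ ^ 5 * ((25 * κ ^ 10) * (577 * κ ^ 20))) * 2 ^ (2 * κ ^ 2 + 1) := by ring
    _ ≤ (4 * κ ^ 3) ^ κ ^ 2 * (4 * κ ^ 3) ^ κ ^ 2 := Nat.mul_le_mul hpoly htwo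
    _ = (4 * κ ^ 3) ^ (2 * κ ^ 2) := by rw [← pow_add]; ring_nf
    _ ≤ (4 * κ ^ 3) ^ (2 * κ ^ 2 + 1) := Nat.pow_le_pow_right hB (by omega)

lemma pow_floor_le_rpow {K s : ℝ} (hK : 4 ≤ K) (hs : 2 ≤ s) :
    (((4 * ⌊K⌋₊ ^ 3) ^ (2 * ⌊K⌋₊ ^ 2 + 1) : ℕ) : ℝ) ≤ (4 * K ^ 3) ^ (s * K ^ 2 + 1) := by
  have hf : (⌊K⌋₊ : ℝ) ≤ K := Nat.floor_le (by linarith)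
  have hB : 1 ≤ 4 * K ^ 3 := by
    have : (1 : ℝ) ≤ K ^ 3 := one_le_pow₀ (by linarith)
    linarith
  calc (((4 * ⌊K⌋₊ ^ 3) ^ (2 * ⌊K⌋₊ ^ 2 + 1) : ℕ) : ℝ)
      = (4 * (⌊K⌋₊ : ℝ) ^ 3) ^ (2 * ⌊K⌋₊ ^ 2 + 1) := by push_cast; rfl
    _ ≤ (4 * K ^ 3) ^ (2 * ⌊K⌋₊ ^ 2 + 1) := by gcongr
    _ = (4 * K ^ 3) ^ ((2 * ⌊K⌋₊ ^ 2 + 1 : ℕ) : ℝ) := (Real.rpow_natCast _ _).symm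
    _ ≤ (4 * K ^ 3) ^ (s * K ^ 2 + 1) := by
        apply Real.rpow_le_rpow_of_exponent_le hB
        push_cast
        gcongr

/-- Let `σ` be a primitive substitution prolongable on `a` with
non-periodic fixed point `x = σ^ω(a)`. The set of return substitutions
`{σ_u : u a nonempty prefix of x}` is finite, of cardinality at most
`(4K_σ³)^(|σ|·K_σ² + 1)`. -/
theorem return_substitutions_finite {A : Type*}
    [Fintype A] [DecidableEq A] [Nonempty A]
    (σ : A → List A) (a : A) (hprim : Primitive σ) (hprol : Prolongable σ a)
    (x : ℕ → A) (hx0 : x 0 = a) (hfix : SeqImage σ x x)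
    (hnp : ¬ IsUltimatelyPeriodic x) :
    {g : ℕ → List ℕ | ∃ u : List A, u ≠ [] ∧ IsPrefixSeq x u ∧
        g = returnSubst σ x u}.Finite ∧
    (({g : ℕ → List ℕ | ∃ u : List A, u ≠ [] ∧ IsPrefixSeq x u ∧
        g = returnSubst σ x u}.ncard : ℝ)) ≤
      (4 * Kconst σ ^ 3) ^ ((mSize σ : ℝ) * Kconst σ ^ 2 + 1) := by
  have hsub : {g : ℕ → List ℕ | ∃ u : List A, u ≠ [] ∧ IsPrefixSeq x u ∧
      g = returnSubst σ x u} ⊆ Set.range fun n => returnSubst σ x (factorAt x 0 n) := by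
    rintro g ⟨u, -, hu, rfl⟩
    exact ⟨u.length, by simp only [isPrefixSeq_iff.1 hu]⟩
  have H := balanced_floor hprim hprol hfix hnp
  obtain ⟨hfin, hcard⟩ := H.card_returnSubst_le
  have hK : 4 ≤ Kconst σ := four_le_Kconst hprim hprol hfix hnp
  refine ⟨hfin.subset hsub, le_trans ?_ (pow_floor_le_rpow hK
    (by exact_mod_cast two_le_mSize hprol))⟩
  exact_mod_cast (Set.ncard_le_ncard hsub hfin).trans
    (hcard.trans (count_le_pow (Nat.le_floor (by exact_mod_cast hK))))

end Rauzy
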